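/- arXiv:1406.3803 — 8 statements merged into one kernel-verified Lean document; each statement's English description precedes it below -/
import Mathlib

section
/- The semigroup UT₃(ℝ) of all upper triangular real 3×3 matrices whose main-diagonal entries are 0s and/or 1s (under matrix multiplication) is nonfinitely based: there is no finite set Σ of semigroup identities holding in UT₃(ℝ) such that every semigroup identity holding in UT₃(ℝ) follows from Σ. -/
/-!
For words `u`, `v`, the identity `u ≈ v` holds in `UT₃(ℝ)` only if, for all letters `x`, `y` and
every set `B` of letters, both words have equally many pairs of an occurrence of `x` and a later
occurrence of `y` with only letters from `B` between them (`ListId.cnt2_eq`). These invariants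
determine a word in which any two occurrences of the same letter are separated by a linear letter,
i.e. one occurring only once (`eq_of_sep`): no nontrivial identity of `UT₃(ℝ)` has such a side.

Consider a word `w` without repeated factors of length 24 all of whose factors of length less than
`2 m` consist of distinct letters. If a value of a word `u`, short compared to `m`, is a factor of
`w`, then the nonlinear letters of `u` take values of length at most 24, so two occurrences of a
letter of `u` not separated by a linear one would produce a short factor of `w` with a repeated
letter. Hence `u` has its equal letters separated by linear ones (`sep_of_infix`), so that no
nontrivial identity of `UT₃(ℝ)` of bounded length applies to `w`. Therefore no `w ≈ w'` with
`w' ≠ w` follows from such identities: it fails in the Rees quotient of the free semigroup over the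
words that are not factors of `w` (`not_followsFrom`).

It remains to find, for each large `m`, two different words `word m 0` and `word m 1` of this kind
with `word m 0 ≈ word m 1` in `UT₃(ℝ)`. Both consist of 32 rows of `m` blocks; block `c` of a row is
one of the two products of the letters `2 c` and `2 c + 1`. The order of the two letters encodes the
binary digits of the number of the row, which prevents repetitions (`word_norep`), except in four
special blocks, each in the middle of eight consecutive rows, whose values are `X`, `Y`, `Y`, `X` in
one of the words and `Y`, `X`, `X`, `Y` in the other, where `X` and `Y` are the two products of the
letters 0 and 1. Changing the orientation of a special block adds to the matrix
product the commutator of the letters 0 and 1, surrounded by products involving all letters, and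
such a matrix is concentrated in the upper right corner (`comm_entries`). The surroundings of the
four special blocks depend on the number `k` of the block through single binary digits of `k` only,
so the alternating sum of the four contributions vanishes (`comm_sum`, `seg_bal`). Hence the
identity holds (`listId_word`).
-/

/-- The subsemigroup `UT₃(ℝ)` of the multiplicative semigroup of real `3 × 3` matrices
consisting of the upper triangular matrices whose main-diagonal entries are 0s and/or 1s. -/
def UT3 : Subsemigroup (Matrix (Fin 3) (Fin 3) ℝ) where
  carrier := {A | (∀ i j : Fin 3, (j : ℕ) < (i : ℕ) → A i j = 0) ∧
    ∀ i : Fin 3, A i i = 0 ∨ A i i = 1}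
  mul_mem' := by
    rintro A B ⟨hA1, hA2⟩ ⟨hB1, hB2⟩
    constructor
    · intro i j hij
      rw [Matrix.mul_apply]
      apply Finset.sum_eq_zero
      intro k _
      rcases lt_or_ge (k : ℕ) (i : ℕ) with h | h
      · rw [hA1 i k h, zero_mul]
      · rw [hB1 k j (lt_of_lt_of_le hij h), mul_zero]
    · intro i
      rw [Matrix.mul_apply, Finset.sum_eq_single i]
      · rcases hA2 i with h1 | h1 <;> rcases hB2 i with h2 | h2 <;>
          rw [h1, h2] <;> simp
      · intro k _ hk
        rcases lt_or_ge (k : ℕ) (i : ℕ) with h | h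
        · rw [hA1 i k h, zero_mul]
        · have hik : (i : ℕ) < (k : ℕ) :=
            lt_of_le_of_ne h (fun he => hk (Fin.val_injective he.symm))
          rw [hB1 k i hik, mul_zero]
      · intro h
        exact absurd (Finset.mem_univ i) h

/-- A semigroup `S` satisfies the semigroup identity `(u, v)` (a pair of elements of the
free semigroup on a countable alphabet) if every homomorphism to `S` equalizes `u` and `v`. -/
def SatisfiesId (S : Type*) [Semigroup S] (e : FreeSemigroup ℕ × FreeSemigroup ℕ) : Prop :=
  ∀ φ : FreeSemigroup ℕ →ₙ* S, φ e.1 = φ e.2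

/-- The identity `e` follows from the system of identities `Sgm` if every semigroup
satisfying all identities of `Sgm` also satisfies `e`. -/
def FollowsFrom (Sgm : Set (FreeSemigroup ℕ × FreeSemigroup ℕ))
    (e : FreeSemigroup ℕ × FreeSemigroup ℕ) : Prop :=
  ∀ (T : Type) [Semigroup T], (∀ e' ∈ Sgm, SatisfiesId T e') → SatisfiesId T e


/-! ### Words as lists -/

/-- The underlying nonempty list of letters of an element of the free semigroup. -/
def toL (x : FreeSemigroup ℕ) : List ℕ := x.head :: x.tail

lemma toL_mul (x y : FreeSemigroup ℕ) : toL (x * y) = toL x ++ toL y := rfl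

lemma toL_injective : Function.Injective toL := by
  rintro ⟨a, l⟩ ⟨b, l'⟩ h
  simp only [toL, List.cons.injEq] at h
  rw [h.1, h.2]

lemma exists_toL (l : List ℕ) (h : l ≠ []) : ∃ x, toL x = l := by
  cases l with
  | nil => exact absurd rfl h
  | cons a l => exact ⟨⟨a, l⟩, rfl⟩

/-- `UT₃(ℝ)` satisfies the identity between the words `a` and `b`, in terms of arbitrary
substitutions of matrices from `UT₃(ℝ)` for the letters. -/
def ListId (a b : List ℕ) : Prop :=
  ∀ f : ℕ → Matrix (Fin 3) (Fin 3) ℝ, (∀ i, f i ∈ UT3) → (a.map f).prod = (b.map f).prod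

lemma hom_eq_prod (φ : FreeSemigroup ℕ →ₙ* ↥UT3) (x : FreeSemigroup ℕ) :
    (φ x : Matrix (Fin 3) (Fin 3) ℝ) =
      ((toL x).map fun i => (φ (FreeSemigroup.of i) : Matrix (Fin 3) (Fin 3) ℝ)).prod := by
  induction x using FreeSemigroup.recOnMul with
  | ih1 a => simp [toL, FreeSemigroup.of]
  | ih2 a y h1 h2 =>
    rw [map_mul, toL_mul, List.map_append, List.prod_append, ← h1, ← h2]
    rfl

lemma satisfiesId_iff (u v : FreeSemigroup ℕ) :
    SatisfiesId ↥UT3 (u, v) ↔ ListId (toL u) (toL v) := by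
  constructor
  · intro h f hf
    have := congrArg Subtype.val (h (FreeSemigroup.lift fun i => (⟨f i, hf i⟩ : ↥UT3)))
    rw [hom_eq_prod, hom_eq_prod] at this
    exact this
  · intro h φ
    apply Subtype.ext
    rw [hom_eq_prod, hom_eq_prod]
    exact h _ fun i => (φ (FreeSemigroup.of i)).2

lemma hom_toL (ψ : FreeSemigroup ℕ →ₙ* FreeSemigroup ℕ) (x : FreeSemigroup ℕ) :
    toL (ψ x) = (toL x).flatMap fun i => toL (ψ (FreeSemigroup.of i)) := by
  induction x using FreeSemigroup.recOnMul with
  | ih1 a => simp [toL, FreeSemigroup.of]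
  | ih2 a y h1 h2 => rw [map_mul, toL_mul, toL_mul, List.flatMap_append, ← h1, ← h2]

/-! ### Invariants of the identities of `UT₃(ℝ)` -/

lemma mem_UT3_of (a b c d e f : ℝ) (ha : a = 0 ∨ a = 1) (hd : d = 0 ∨ d = 1)
    (hf : f = 0 ∨ f = 1) : !![a, b, c; 0, d, e; 0, 0, f] ∈ UT3 := by
  constructor
  · intro i j hij
    fin_cases i <;> fin_cases j <;> simp_all
  · intro i
    fin_cases i <;> simp_all

/-- Some occurrence of `x` and a later occurrence of `y` in `l` have only letters
satisfying `B` between them. -/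
def Occ (B : ℕ → Prop) (x y : ℕ) (l : List ℕ) : Prop :=
  ∃ p m q, l = p ++ x :: (m ++ y :: q) ∧ ∀ z ∈ m, B z

open Classical in
/-- The number of occurrences of `y` preceded only by letters satisfying `B`. -/
noncomputable def cnt1 (B : ℕ → Prop) (y : ℕ) : List ℕ → ℕ
  | [] => 0
  | z :: l => (if z = y then 1 else 0) + (if B z then cnt1 B y l else 0)

open Classical in
/-- The number of pairs consisting of an occurrence of `x` and a later occurrence of `y` with
only letters satisfying `B` between them. -/
noncomputable def cnt2 (B : ℕ → Prop) (x y : ℕ) : List ℕ → ℕ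
  | [] => 0
  | z :: l => cnt2 B x y l + (if z = x then cnt1 B y l else 0)

lemma cnt1_ne_zero (B : ℕ → Prop) (y : ℕ) (l : List ℕ) :
    cnt1 B y l ≠ 0 ↔ ∃ m q, l = m ++ y :: q ∧ ∀ z ∈ m, B z := by
  induction l with
  | nil => simp [cnt1]
  | cons z l ih =>
    constructor
    · intro h
      by_cases hz : z = y
      · exact ⟨[], l, by simp [hz], by simp⟩
      · by_cases hB : B z
        · simp only [cnt1, hz, hB, if_true, if_false, zero_add] at h
          obtain ⟨m, q, h1, h2⟩ := ih.1 h
          exact ⟨z :: m, q, by simp [h1], by simpa [hB] using h2⟩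
        · simp [cnt1, hz, hB] at h
    · rintro ⟨m, q, h1, h2⟩
      cases m with
      | nil =>
        simp only [List.nil_append, List.cons.injEq] at h1
        simp [cnt1, h1.1]
      | cons a m =>
        simp only [List.cons_append, List.cons.injEq] at h1
        have hB : B z := by rw [h1.1]; exact h2 a (by simp)
        have := ih.2 ⟨m, q, h1.2, fun z hz => h2 z (by simp [hz])⟩
        simp only [cnt1, hB, if_true]
        omega

lemma cnt2_ne_zero (B : ℕ → Prop) (x y : ℕ) (l : List ℕ) :
    cnt2 B x y l ≠ 0 ↔ Occ B x y l := by
  induction l with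
  | nil => simp [cnt2, Occ]
  | cons z l ih =>
    constructor
    · intro h
      by_cases h0 : cnt2 B x y l = 0
      · by_cases hz : z = x
        · simp only [cnt2, h0, hz, if_true, zero_add] at h
          obtain ⟨m, q, h1, h2⟩ := (cnt1_ne_zero B y l).1 h
          exact ⟨[], m, q, by simp [h1, hz], h2⟩
        · simp [cnt2, h0, hz] at h
      · obtain ⟨p, m, q, h1, h2⟩ := ih.1 h0
        exact ⟨z :: p, m, q, by simp [h1], h2⟩
    · rintro ⟨p, m, q, h1, h2⟩
      cases p with
      | nil =>
        simp only [List.nil_append, List.cons.injEq] at h1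
        have := (cnt1_ne_zero B y l).2 ⟨m, q, h1.2, h2⟩
        simp only [cnt2, h1.1, if_true]
        omega
      | cons a p =>
        simp only [List.cons_append, List.cons.injEq] at h1
        have := ih.2 ⟨p, m, q, h1.2, h2⟩
        simp only [cnt2]
        omega

open Classical in
/-- The pair counts are read off the upper right entry of a product of matrices whose middle
diagonal entry vanishes exactly at the letters not satisfying `B`. -/
lemma ListId.cnt2_eq {a b : List ℕ} (h : ListId a b) (B : ℕ → Prop) (x y : ℕ) :
    cnt2 B x y a = cnt2 B x y b := by
  have key := h (fun z => !![1, if z = x then 1 else 0, 0;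
    0, if B z then 1 else 0, if z = y then 1 else 0; 0, 0, 1])
    (fun z => mem_UT3_of _ _ _ _ _ _ (by simp) (by split_ifs <;> simp) (by simp))
  have aux : ∀ l : List ℕ, ∀ M : Matrix (Fin 3) (Fin 3) ℝ,
      M = (l.map (fun z => !![(1 : ℝ), if z = x then 1 else 0, 0;
        0, if B z then 1 else 0, if z = y then 1 else 0; 0, 0, 1])).prod →
      M 0 2 = cnt2 B x y l ∧ M 1 2 = cnt1 B y l ∧ M 2 2 = 1 := by
    intro l
    induction l with
    | nil => rintro M rfl; simp [cnt1, cnt2]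
    | cons z l ih =>
      rintro M rfl
      obtain ⟨h1, h2, h3⟩ := ih _ rfl
      rw [List.map_cons, List.prod_cons]
      simp only [Matrix.mul_apply, Fin.sum_univ_three, h1, h2, h3]
      refine ⟨?_, ?_, ?_⟩ <;> simp [cnt1, cnt2, add_comm]
  have h1 := (aux a _ rfl).1
  rw [key, (aux b _ rfl).1] at h1
  exact_mod_cast h1.symm

lemma ListId.occ {a b : List ℕ} (h : ListId a b) (B : ℕ → Prop) (x y : ℕ) :
    Occ B x y a ↔ Occ B x y b := by
  rw [← cnt2_ne_zero, ← cnt2_ne_zero, h.cnt2_eq]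

lemma ListId.count_eq {a b : List ℕ} (h : ListId a b) (x : ℕ) : a.count x = b.count x := by
  have key := h (fun z => !![1, if z = x then 1 else 0, 0; 0, 1, 0; 0, 0, 1])
    (fun z => mem_UT3_of _ _ _ _ _ _ (by simp) (by simp) (by simp))
  have aux : ∀ l : List ℕ, ∀ M : Matrix (Fin 3) (Fin 3) ℝ,
      M = (l.map (fun z => !![(1 : ℝ), if z = x then 1 else 0, 0; 0, 1, 0; 0, 0, 1])).prod →
      M 0 1 = l.count x ∧ M 1 1 = 1 ∧ M 2 1 = 0 := by
    intro l
    induction l with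
    | nil => rintro M rfl; simp
    | cons z l ih =>
      rintro M rfl
      obtain ⟨h1, h2, h3⟩ := ih _ rfl
      rw [List.map_cons, List.prod_cons]
      simp only [Matrix.mul_apply, Fin.sum_univ_three, h1, h2, h3]
      refine ⟨?_, ?_, ?_⟩ <;> simp [List.count_cons]
  have h1 := (aux a _ rfl).1
  rw [key, (aux b _ rfl).1] at h1
  exact_mod_cast h1.symm

/-! ### Words fixed by every identity of `UT₃(ℝ)` -/

/-- Two occurrences of the same letter in `l` are always separated by a linear letter, i.e.
a letter that occurs exactly once in `l`. -/
def SepByLinear (l : List ℕ) : Prop :=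
  ∀ p x m q, l = p ++ x :: (m ++ x :: q) → ∃ z ∈ m, l.count z = 1

lemma exists_last (R : ℕ → Prop) (l : List ℕ) (h : ∃ z ∈ l, R z) :
    ∃ p t q, l = p ++ t :: q ∧ R t ∧ ∀ z ∈ q, ¬ R z := by
  induction l with
  | nil => simp at h
  | cons a l ih =>
    by_cases hl : ∃ z ∈ l, R z
    · obtain ⟨p, t, q, h1, h2⟩ := ih hl
      exact ⟨a :: p, t, q, by simp [h1], h2⟩
    · push Not at hl
      obtain ⟨z, hz, hR⟩ := h
      rcases List.mem_cons.1 hz with rfl | hz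
      · exact ⟨[], z, l, rfl, hR, hl⟩
      · exact absurd hR (hl z hz)

lemma exists_first_diff (a b : List ℕ) : a = b ∨
    (∃ p x q y q', x ≠ y ∧ a = p ++ x :: q ∧ b = p ++ y :: q') ∨
    (∃ x q, a = b ++ x :: q) ∨ ∃ x q, b = a ++ x :: q := by
  induction a generalizing b with
  | nil =>
    cases b with
    | nil => simp
    | cons y b => exact Or.inr (Or.inr (Or.inr ⟨y, b, rfl⟩))
  | cons x a ih =>
    cases b with
    | nil => exact Or.inr (Or.inr (Or.inl ⟨x, a, rfl⟩))
    | cons y b =>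
      by_cases hxy : x = y
      · subst hxy
        rcases ih b with rfl | ⟨p, x', q, y', q', h, h1, h2⟩ | ⟨x', q, h⟩ | ⟨x', q, h⟩
        · exact Or.inl rfl
        · exact Or.inr (Or.inl ⟨x :: p, x', q, y', q', h, by simp [h1], by simp [h2]⟩)
        · exact Or.inr (Or.inr (Or.inl ⟨x', q, by simp [h]⟩))
        · exact Or.inr (Or.inr (Or.inr ⟨x', q, by simp [h]⟩))
      · exact Or.inr (Or.inl ⟨[], x, a, y, b, hxy, rfl, rfl⟩)

/-- The invariants determine a word in which equal letters are separated by linear ones.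
The leading letter `s` is an auxiliary linear letter, ensuring that every nonempty prefix
contains a linear letter. If the words first differ in letters `x ≠ y`, and `t` is the last
linear letter before that place, then exactly one of the words has an occurrence of `t`
followed by an occurrence of `x` without `y` in between. -/
lemma eq_of_sep_cons {s : ℕ} {a b : List ℕ} (hs : (s :: a).count s = 1)
    (h : ListId (s :: a) (s :: b)) (hP : SepByLinear (s :: a)) : s :: a = s :: b := by
  rcases exists_first_diff (s :: a) (s :: b) with
    h0 | ⟨p, x, q, y, q', hxy, h1, h2⟩ | ⟨x, q, h1⟩ | ⟨x, q, h1⟩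
  · exact h0
  · exfalso
    have hp : s ∈ p := by
      cases p with
      | nil =>
        simp only [List.nil_append, List.cons.injEq] at h1 h2
        exact absurd (h1.1.symm.trans h2.1) hxy
      | cons c p =>
        simp only [List.cons_append, List.cons.injEq] at h1
        simp [h1.1]
    have hPb : ∀ p x m q, s :: b = p ++ x :: (m ++ x :: q) →
        ∃ z ∈ m, (s :: a).count z = 1 := by
      intro p x m q hb
      by_contra! hm
      obtain ⟨p', m', q', h1, h2⟩ := (h.occ (fun z => (s :: a).count z ≠ 1) x x).2
        ⟨p, m, q, hb, hm⟩
      obtain ⟨z, hz, hz'⟩ := hP _ _ _ _ h1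
      exact h2 z hz hz'
    obtain ⟨p1, t, p2, rfl, ht, hp2⟩ := exists_last (fun z => (s :: a).count z = 1) p
      ⟨s, hp, hs⟩
    have hx : x ∉ p2 := by
      intro hx
      obtain ⟨m1, m2, rfl⟩ := List.append_of_mem hx
      obtain ⟨z, hz, hz'⟩ := hP (p1 ++ t :: m1) x m2 q (by rw [h1]; simp)
      exact hp2 z (by simp [hz]) hz'
    have hy : y ∉ p2 := by
      intro hy
      obtain ⟨m1, m2, rfl⟩ := List.append_of_mem hy
      obtain ⟨z, hz, hz'⟩ := hPb (p1 ++ t :: m1) y m2 q' (by rw [h2]; simp)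
      exact hp2 z (by simp [hz]) hz'
    obtain ⟨r, m, q'', h3, h4⟩ := (h.occ (fun z => z ≠ y) t x).1
      ⟨p1, p2, q, by rw [h1]; simp, fun z hz hzy => hy (hzy ▸ hz)⟩
    have htb : (s :: b).count t = 1 := by rw [← h.count_eq, ht]
    have e1 : s :: b = p1 ++ t :: (p2 ++ y :: q') := by rw [h2]; simp
    have hn1 : t ∉ p1 := by
      intro hm
      have := List.count_pos_iff.2 hm
      rw [e1, List.count_append, List.count_cons_self] at htb
      omega
    have hn2 : t ∉ r := by
      intro hm
      have := List.count_pos_iff.2 hm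
      rw [h3, List.count_append, List.count_cons_self] at htb
      omega
    have e2 : p1 ++ t :: (p2 ++ y :: q') = r ++ t :: (m ++ x :: q'') := by rw [← e1, h3]
    have e3 : p2 ++ y :: q' = m ++ x :: q'' := by
      rcases List.append_eq_append_iff.1 e2 with ⟨c, hc, hc'⟩ | ⟨c, hc, hc'⟩
      · cases c with
        | nil => simpa using hc'
        | cons d c =>
          simp only [List.cons_append, List.cons.injEq] at hc'
          exact absurd (by rw [hc, hc'.1]; simp) hn2
      · cases c with
        | nil => simpa using hc'.symm
        | cons d c =>
          simp only [List.cons_append, List.cons.injEq] at hc'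
          exact absurd (by rw [hc, hc'.1]; simp) hn1
    rcases List.append_eq_append_iff.1 e3 with ⟨c, hc, hc'⟩ | ⟨c, hc, hc'⟩
    · cases c with
      | nil =>
        simp only [List.nil_append, List.cons.injEq] at hc'
        exact hxy hc'.1.symm
      | cons d c =>
        simp only [List.cons_append, List.cons.injEq] at hc'
        exact h4 y (by rw [hc, hc'.1]; simp) rfl
    · cases c with
      | nil =>
        simp only [List.nil_append, List.cons.injEq] at hc'
        exact hxy hc'.1
      | cons d c =>
        simp only [List.cons_append, List.cons.injEq] at hc'
        exact hx (by rw [hc, hc'.1]; simp)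
  · have := h.count_eq x
    rw [h1, List.count_append, List.count_cons_self] at this
    omega
  · have := h.count_eq x
    rw [h1, List.count_append, List.count_cons_self] at this
    omega

/-- An identity of `UT₃(ℝ)` one of whose sides has its equal letters separated by linear ones is
trivial. -/
lemma eq_of_sep {a b : List ℕ} (h : ListId a b) (hP : SepByLinear a) : a = b := by
  obtain ⟨s, hs⟩ : ∃ s, s ∉ a := by
    obtain ⟨s, hs⟩ := Infinite.exists_notMem_finset a.toFinset
    exact ⟨s, by simpa using hs⟩
  have hc : (s :: a).count s = 1 := by
    rw [List.count_cons_self, List.count_eq_zero.2 hs]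
  have h' : ListId (s :: a) (s :: b) := by
    intro f hf
    rw [List.map_cons, List.map_cons, List.prod_cons, List.prod_cons, h f hf]
  have hPs : SepByLinear (s :: a) := by
    intro p x m q hl
    cases p with
    | nil =>
      simp only [List.nil_append, List.cons.injEq] at hl
      exact absurd (by rw [hl.2, hl.1]; simp) hs
    | cons c p =>
      simp only [List.cons_append, List.cons.injEq] at hl
      obtain ⟨z, hz, hz'⟩ := hP p x m q hl.2
      refine ⟨z, hz, ?_⟩
      have hza : z ∈ a := by rw [hl.2]; simp [hz]
      have hne : s ≠ z := by
        rintro rfl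
        exact hs hza
      rw [List.count_cons_of_ne hne, hz']
  simpa using eq_of_sep_cons hc h' hPs

/-! ### Values of short words in words with few repetitions -/

/-- If `w` has no repeated factor of length `K` and all its factors of length at most `M` consist
of distinct letters, then only words whose equal letters are separated by linear ones can have a
value inside `w`, among words of length at most `M / K`: nonlinear letters must take values
of length at most `K`. -/
lemma sep_of_infix {w : List ℕ} {K M : ℕ}
    (H1 : ∀ a f b a' b', w = a ++ f ++ b → w = a' ++ f ++ b' → K ≤ f.length →
      a.length = a'.length)
    (H2 : ∀ a f b, w = a ++ f ++ b → f.length ≤ M → f.Nodup)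
    {ψ : ℕ → List ℕ} (hψ : ∀ i, ψ i ≠ []) {u : List ℕ} (hu : u.length * K ≤ M)
    (hw : u.flatMap ψ <:+: w) : SepByLinear u := by
  intro p x m q hl
  by_contra! hm
  obtain ⟨α, β, hαβ⟩ := hw
  -- A longer value of a nonlinear letter would be a repeated factor of `w`.
  have short : ∀ z, z ∈ u → u.count z ≠ 1 → (ψ z).length ≤ K := by
    intro z hz hc
    obtain ⟨c1, c2, rfl⟩ := List.append_of_mem hz
    have hz2 : z ∈ c1 ∨ z ∈ c2 := by
      by_contra! hn
      apply hc
      rw [List.count_append, List.count_cons_self, List.count_eq_zero.2 hn.1,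
        List.count_eq_zero.2 hn.2]
    have hpos : 0 < (ψ z).length := List.length_pos_iff.2 (hψ z)
    by_contra! hK
    rcases hz2 with hz2 | hz2
    · obtain ⟨d1, d2, rfl⟩ := List.append_of_mem hz2
      have := H1 (α ++ d1.flatMap ψ) (ψ z) (d2.flatMap ψ ++ ψ z ++ c2.flatMap ψ ++ β)
        (α ++ d1.flatMap ψ ++ ψ z ++ d2.flatMap ψ) (c2.flatMap ψ ++ β)
        (by rw [← hαβ]; simp) (by rw [← hαβ]; simp) hK.le
      simp only [List.length_append] at this
      omega
    · obtain ⟨d1, d2, rfl⟩ := List.append_of_mem hz2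
      have := H1 (α ++ c1.flatMap ψ) (ψ z) (d1.flatMap ψ ++ ψ z ++ d2.flatMap ψ ++ β)
        (α ++ c1.flatMap ψ ++ ψ z ++ d1.flatMap ψ) (d2.flatMap ψ ++ β)
        (by rw [← hαβ]; simp) (by rw [← hαβ]; simp) hK.le
      simp only [List.length_append] at this
      omega
  have hx : u.count x ≠ 1 := by
    rw [hl, List.count_append, List.count_cons_self, List.count_append, List.count_cons_self]
    omega
  have len : ∀ l : List ℕ, (∀ z ∈ l, (ψ z).length ≤ K) →
      (l.flatMap ψ).length ≤ l.length * K := by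
    intro l
    induction l with
    | nil => simp
    | cons z l ih =>
      intro hl
      have h1 := ih fun z hz => hl z (by simp [hz])
      have h2 := hl z (by simp)
      simp only [List.flatMap_cons, List.length_append, List.length_cons, Nat.succ_mul]
      omega
  have hlen : ((x :: (m ++ [x])).flatMap ψ).length ≤ M := by
    refine (len _ ?_).trans (le_trans (Nat.mul_le_mul_right K ?_) hu)
    · intro z hz
      refine short z ?_ ?_
      · rw [hl]
        simp only [List.mem_cons, List.mem_append, List.not_mem_nil, or_false] at hz ⊢
        tauto
      · simp only [List.mem_cons, List.mem_append, List.not_mem_nil, or_false] at hz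
        rcases hz with rfl | hz | rfl
        · exact hx
        · exact hm z hz
        · exact hx
    · rw [hl]; simp; omega
  -- The value of the factor `x m x` of `u` is short, yet its letters are not distinct.
  have nd := H2 (α ++ p.flatMap ψ) ((x :: (m ++ [x])).flatMap ψ) (q.flatMap ψ ++ β)
    (by rw [← hαβ, hl]; simp) hlen
  obtain ⟨c, l, hc⟩ := List.exists_cons_of_ne_nil (hψ x)
  simp [hc] at nd

/-! ### A semigroup separating a word from all others -/

/-- The Rees congruence on the free semigroup collapsing all words that are not factors
of `w`. -/
def factorCon (w : List ℕ) : Con (FreeSemigroup ℕ) where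
  r x y := x = y ∨ (¬ toL x <:+: w ∧ ¬ toL y <:+: w)
  iseqv :=
    { refl := fun _ => Or.inl rfl
      symm := by
        rintro x y (rfl | ⟨h1, h2⟩)
        · exact Or.inl rfl
        · exact Or.inr ⟨h2, h1⟩
      trans := by
        rintro x y z (rfl | ⟨h1, h2⟩) (rfl | ⟨h3, h4⟩)
        · exact Or.inl rfl
        · exact Or.inr ⟨h3, h4⟩
        · exact Or.inr ⟨h1, h2⟩
        · exact Or.inr ⟨h1, h4⟩ }
  mul' := by
    have hl : ∀ x y, toL (x * y) <:+: w → toL x <:+: w := fun x y h =>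
      List.IsInfix.trans (by rw [toL_mul]; exact (List.prefix_append _ _).isInfix) h
    have hr : ∀ x y, toL (x * y) <:+: w → toL y <:+: w := fun x y h =>
      List.IsInfix.trans (by rw [toL_mul]; exact (List.suffix_append _ _).isInfix) h
    rintro x y x' y' (rfl | ⟨h1, h2⟩) (rfl | ⟨h3, h4⟩)
    · exact Or.inl rfl
    · exact Or.inr ⟨fun h => h3 (hr _ _ h), fun h => h4 (hr _ _ h)⟩
    · exact Or.inr ⟨fun h => h1 (hl _ _ h), fun h => h2 (hl _ _ h)⟩
    · exact Or.inr ⟨fun h => h1 (hl _ _ h), fun h => h2 (hl _ _ h)⟩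

/-- If no identity of `Sgm` applies nontrivially to factors of `W`, then `W ≈ W'` does not follow
from `Sgm`: the Rees quotient of the free semigroup over the non-factors of `W` is a model of
`Sgm` in which `W ≈ W'` fails. -/
lemma not_followsFrom {Sgm : Set (FreeSemigroup ℕ × FreeSemigroup ℕ)} {W W' : FreeSemigroup ℕ}
    (hW : W ≠ W')
    (h : ∀ e ∈ Sgm, ∀ ψ : FreeSemigroup ℕ →ₙ* FreeSemigroup ℕ,
      (toL (ψ e.1) <:+: toL W ∨ toL (ψ e.2) <:+: toL W) → e.1 = e.2) :
    ¬ FollowsFrom Sgm (W, W') := by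
  intro hF
  have hS : ∀ e ∈ Sgm, SatisfiesId (factorCon (toL W)).Quotient e := by
    intro e he φ
    have hsurj : ∀ i, ∃ y : FreeSemigroup ℕ,
        (y : (factorCon (toL W)).Quotient) = φ (FreeSemigroup.of i) :=
      fun i => Quotient.exists_rep _
    choose g hg using hsurj
    have hφ : ∀ x, φ x = ((FreeSemigroup.lift g x : FreeSemigroup ℕ) :
        (factorCon (toL W)).Quotient) := by
      intro x
      induction x using FreeSemigroup.recOnMul with
      | ih1 a => exact (hg a).symm
      | ih2 a y h1 h2 => rw [map_mul, map_mul, h1, h2, Con.coe_mul]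
    rw [hφ, hφ, Con.eq]
    by_cases h1 : toL (FreeSemigroup.lift g e.1) <:+: toL W ∨
        toL (FreeSemigroup.lift g e.2) <:+: toL W
    · rw [h e he _ h1]
      exact Or.inl rfl
    · exact Or.inr (not_or.1 h1)
  have := hF (factorCon (toL W)).Quotient hS
    ⟨fun x => (x : (factorCon (toL W)).Quotient), fun _ _ => rfl⟩
  rcases (Con.eq _).1 this with h1 | h1
  · exact hW h1
  · exact h1.1 (List.infix_refl _)

/-! ### The words -/

/-- The orientation of the block number `t`. The blocks form 32 rows of `m` blocks each. Block
`c` of row `h` carries the binary digit of `h` number `c % 5`, except for the initial blocks of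
the rows `8 k + 4`, which carry `b` plus the sum of the two binary digits of `k`. -/
def ori (m b t : ℕ) : ℕ :=
  if t % m = 0 ∧ t / m % 8 = 4 then (t / m / 8 % 2 + t / m / 16 + b) % 2
  else t / m / 2 ^ (t % m % 5) % 2

/-- The letter at position `q`: block `t` is formed by the positions `2 t` and `2 t + 1`, and is
one of the two products of the letters `2 c` and `2 c + 1`, where `c = t % m`. -/
def letter (m b q : ℕ) : ℕ := 2 * (q / 2 % m) + (q + ori m b (q / 2)) % 2

/-- The word with 32 rows of `m` blocks of two letters each. The identity between
`word m 0` and `word m 1` holds in `UT₃(ℝ)`. -/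
def word (m b : ℕ) : List ℕ := (List.range (64 * m)).map (letter m b)

lemma word_length (m b : ℕ) : (word m b).length = 64 * m := by simp [word]

lemma word_ne (m : ℕ) (hm : 0 < m) : word m 0 ≠ word m 1 := by
  intro h
  have h1 := congrArg (fun l => l[8 * m]?) h
  have e : 8 * m / 2 = 4 * m := by omega
  have e2 : 8 * m % 2 = 0 := by omega
  have e3 : (8 * m + 1) % 2 = 1 := by omega
  have hlt : 8 * m < 64 * m := by omega
  simp [word, letter, ori, List.getElem?_range hlt, e, Nat.mul_div_cancel 4 hm, e2, e3] at h1

/-- A factor of `word m b` consists of letters in consecutive positions. -/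
lemma factor_eq {m b : ℕ} {a f c : List ℕ} (h : word m b = a ++ f ++ c) :
    a.length + f.length ≤ 64 * m ∧
    f = (List.range f.length).map fun j => letter m b (a.length + j) := by
  have hl : a.length + f.length ≤ 64 * m := by
    rw [← word_length m b, h]
    simp
  refine ⟨hl, ?_⟩
  apply List.ext_getElem
  · simp
  · intro j h1 h2
    have h3 : (word m b)[a.length + j]? = f[j]? := by
      rw [h, List.append_assoc, List.getElem?_append_right (by omega),
        Nat.add_sub_cancel_left, List.getElem?_append_left h1]
    have h4 : a.length + j < 64 * m := by omega
    rw [List.getElem?_eq_getElem h1, word, List.getElem?_map, List.getElem?_range h4] at h3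
    simp only [Option.map_some, Option.some.injEq] at h3
    simp [h3]

lemma letter_eq {m b q q' : ℕ} (h : letter m b q = letter m b q') :
    q / 2 % m = q' / 2 % m ∧ (q + ori m b (q / 2)) % 2 = (q' + ori m b (q' / 2)) % 2 := by
  unfold letter at h
  omega

lemma letter_dist {m b q q' : ℕ} (h : letter m b q = letter m b q') (hq : q < q') :
    2 * m - 1 ≤ q' - q := by
  obtain ⟨h1, h2⟩ := letter_eq h
  rcases eq_or_ne (q / 2) (q' / 2) with h3 | h3
  · rw [h3] at h2
    omega
  · have h4 : q / 2 < q' / 2 := by omega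
    have h5 : m ∣ q' / 2 - q / 2 := (Nat.modEq_iff_dvd' h4.le).1 h1
    have h6 := Nat.le_of_dvd (by omega) h5
    omega

lemma word_nodup (m b : ℕ) (a f c : List ℕ) (h : word m b = a ++ f ++ c)
    (hf : f.length ≤ 2 * m - 1) : f.Nodup := by
  rw [(factor_eq h).2]
  refine List.Nodup.map_on ?_ List.nodup_range
  intro i hi j hj hij
  rw [List.mem_range] at hi hj
  rcases lt_trichotomy i j with h1 | h1 | h1
  · have := letter_dist hij (by omega)
    omega
  · exact h1
  · have := letter_dist hij.symm (by omega)
    omega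

lemma eq_of_bits {h h' c : ℕ} (hh : h < 32) (hh' : h' < 32)
    (H : ∀ i < 5, h / 2 ^ ((c + i) % 5) % 2 = h' / 2 ^ ((c + i) % 5) % 2) : h = h' := by
  have key : ∀ b < 5, h / 2 ^ b % 2 = h' / 2 ^ b % 2 := by
    intro b hb
    have := H ((b + 5 - c % 5) % 5) (by omega)
    have e : (c + (b + 5 - c % 5) % 5) % 5 = b := by omega
    rwa [e] at this
  have h0 := key 0 (by norm_num)
  have h1 := key 1 (by norm_num)
  have h2 := key 2 (by norm_num)
  have h3 := key 3 (by norm_num)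
  have h4 := key 4 (by norm_num)
  norm_num at h0 h1 h2 h3 h4
  omega

lemma div_mod_add {m s i : ℕ} (h : s % m + i < m) :
    (s + i) / m = s / m ∧ (s + i) % m = s % m + i := by
  have e : s + i = (s % m + i) + m * (s / m) := by
    have := Nat.mod_add_div s m
    omega
  rw [e, Nat.add_mul_div_left _ _ (by omega), Nat.add_mul_mod_self_left, Nat.div_eq_of_lt h,
    Nat.mod_eq_of_lt h]
  simp

/-- Five consecutive blocks away from the start of a row determine the number of the row. -/
lemma row_eq {m b s s' : ℕ} (hs : s < 32 * m) (hs' : s' < 32 * m) (hmod : s % m = s' % m)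
    (h1 : 1 ≤ s % m) (h5 : s % m + 5 ≤ m)
    (H : ∀ i < 5, ori m b (s + i) = ori m b (s' + i)) : s = s' := by
  have hdiv : s / m = s' / m := by
    refine eq_of_bits (c := s % m) (Nat.div_lt_of_lt_mul (by linarith))
      (Nat.div_lt_of_lt_mul (by linarith)) ?_
    intro i hi
    have e := div_mod_add (m := m) (s := s) (i := i) (by omega)
    have e' := div_mod_add (m := m) (s := s') (i := i) (by omega)
    have := H i hi
    unfold ori at this
    rw [e.1, e.2, e'.1, e'.2, ← hmod, if_neg (by omega), if_neg (by omega)] at this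
    exact this
  rw [← Nat.mod_add_div s m, ← Nat.mod_add_div s' m, hmod, hdiv]

lemma mod_succ_ne {m s : ℕ} (hm : 2 ≤ m) : (s + 1) % m ≠ s % m := by
  intro h
  have : m ∣ s + 1 - s := (Nat.modEq_iff_dvd' (by omega)).1 h.symm
  have := Nat.le_of_dvd (by omega) this
  omega

/-- No factor of length 24 occurs twice: such a factor contains five consecutive blocks away from
the start of a row. -/
lemma word_norep (m b : ℕ) (hm : 12 ≤ m) (a f c a' c' : List ℕ) (h : word m b = a ++ f ++ c)
    (h' : word m b = a' ++ f ++ c') (hf : 24 ≤ f.length) : a.length = a'.length := by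
  obtain ⟨l1, e1⟩ := factor_eq h
  obtain ⟨l2, e2⟩ := factor_eq h'
  generalize a.length = A at *
  generalize a'.length = A' at *
  have H : ∀ j < 24, letter m b (A + j) = letter m b (A' + j) := by
    intro j hj
    exact List.map_inj_left.1 (e1.symm.trans e2) j (List.mem_range.2 (by omega))
  have H0 := letter_eq (H 0 (by norm_num))
  have H1 := letter_eq (H 1 (by norm_num))
  have H2 := letter_eq (H 2 (by norm_num))
  have hpar : A % 2 = A' % 2 := by
    by_contra hne
    rcases Nat.mod_two_eq_zero_or_one A with hA | hA
    · have i1 : (A + 1) / 2 = (A + 0) / 2 := by omega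
      have i2 : (A' + 1) / 2 = (A' + 0) / 2 + 1 := by omega
      rw [i1, i2] at H1
      exact mod_succ_ne (by omega) (H1.1.symm.trans H0.1)
    · have i1 : (A' + 1) / 2 = (A' + 0) / 2 := by omega
      have i2 : (A + 1) / 2 = (A + 0) / 2 + 1 := by omega
      rw [i1, i2] at H1
      exact mod_succ_ne (by omega) (H1.1.trans H0.1.symm)
  have hS : ∀ i < 10, (A / 2 + 1 + i) % m = (A' / 2 + 1 + i) % m ∧
      ori m b (A / 2 + 1 + i) = ori m b (A' / 2 + 1 + i) := by
    intro i hi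
    have h1 := letter_eq (H (2 + 2 * i - A % 2) (by omega))
    have i1 : (A + (2 + 2 * i - A % 2)) / 2 = A / 2 + 1 + i := by omega
    have i2 : (A' + (2 + 2 * i - A % 2)) / 2 = A' / 2 + 1 + i := by omega
    rw [i1, i2] at h1
    refine ⟨h1.1, ?_⟩
    have o1 : ori m b (A / 2 + 1 + i) < 2 := by unfold ori; split_ifs <;> omega
    have o2 : ori m b (A' / 2 + 1 + i) < 2 := by unfold ori; split_ifs <;> omega
    omega
  obtain ⟨i0, hi0, g1, g2⟩ : ∃ i0 ≤ 5, 1 ≤ (A / 2 + 1 + i0) % m ∧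
      (A / 2 + 1 + i0) % m + 5 ≤ m := by
    generalize A / 2 + 1 = s
    have hlt := Nat.mod_lt s (show 0 < m by omega)
    rcases Nat.eq_zero_or_pos (s % m) with h0 | h0
    · have := (div_mod_add (m := m) (s := s) (i := 1) (by omega)).2
      exact ⟨1, by norm_num, by omega, by omega⟩
    · by_cases h5 : s % m + 5 ≤ m
      · exact ⟨0, by norm_num, h0, h5⟩
      · refine ⟨m - s % m + 1, by omega, ?_⟩
        have e : s + (m - s % m + 1) = 1 + m * (s / m + 1) := by
          have := Nat.mod_add_div s m
          rw [Nat.mul_add]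
          omega
        rw [e, Nat.add_mul_mod_self_left, Nat.mod_eq_of_lt (by omega)]
        omega
  have := row_eq (m := m) (b := b) (s := A / 2 + 1 + i0) (s' := A' / 2 + 1 + i0) (by omega)
    (by omega) (hS i0 (by omega)).1 g1 g2 (fun i hi => by
      have := (hS (i0 + i) (by omega)).2
      simpa only [add_assoc] using this)
  omega

/-! ### The identity between the words holds in `UT₃(ℝ)` -/

/-- Real `3 × 3` matrices. -/
abbrev Mat := Matrix (Fin 3) (Fin 3) ℝ

section entries

variable {A B : Mat}

lemma UT3.low (hA : A ∈ UT3) : A 1 0 = 0 ∧ A 2 0 = 0 ∧ A 2 1 = 0 :=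
  ⟨hA.1 1 0 (by simp), hA.1 2 0 (by simp), hA.1 2 1 (by simp)⟩

lemma UT3.mul_diag (hA : A ∈ UT3) (hB : B ∈ UT3) (i : Fin 3) :
    (A * B) i i = A i i * B i i := by
  have := UT3.low hA
  have := UT3.low hB
  fin_cases i <;> simp [Matrix.mul_apply, Fin.sum_univ_three, *]

lemma UT3.mul01 (hB : B ∈ UT3) :
    (A * B) 0 1 = A 0 0 * B 0 1 + A 0 1 * B 1 1 := by
  have := UT3.low hB
  simp [Matrix.mul_apply, Fin.sum_univ_three, *]

lemma UT3.mul12 (hA : A ∈ UT3) :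
    (A * B) 1 2 = A 1 1 * B 1 2 + A 1 2 * B 2 2 := by
  have := UT3.low hA
  simp [Matrix.mul_apply, Fin.sum_univ_three, *]

lemma UT3.one_mem : (1 : Mat) ∈ UT3 :=
  ⟨fun i j h => Matrix.one_apply_ne (by rintro rfl; omega), fun i => by simp⟩

lemma UT3.prod_mem (l : List ℕ) (F : ℕ → Mat) (hF : ∀ i, F i ∈ UT3) :
    (l.map F).prod ∈ UT3 := by
  induction l with
  | nil => exact UT3.one_mem
  | cons a l ih =>
    rw [List.map_cons, List.prod_cons]
    exact UT3.mul_mem (hF a) ih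

end entries

/-- Four matrices of `UT₃(ℝ)` with the same diagonal such that the alternating sum
`A0 - A1 - A2 + A3` can be nonzero only in the upper right corner. -/
structure Bal (A0 A1 A2 A3 : Mat) : Prop where
  mem0 : A0 ∈ UT3
  mem1 : A1 ∈ UT3
  mem2 : A2 ∈ UT3
  mem3 : A3 ∈ UT3
  d1 : ∀ i, A1 i i = A0 i i
  d2 : ∀ i, A2 i i = A0 i i
  d3 : ∀ i, A3 i i = A0 i i
  e01 : A0 0 1 + A3 0 1 = A1 0 1 + A2 0 1
  e12 : A0 1 2 + A3 1 2 = A1 1 2 + A2 1 2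

lemma Bal.one : Bal 1 1 1 1 :=
  ⟨UT3.one_mem, UT3.one_mem, UT3.one_mem, UT3.one_mem, fun _ => rfl, fun _ => rfl, fun _ => rfl,
    rfl, rfl⟩

lemma Bal.mul {A0 A1 A2 A3 B0 B1 B2 B3 : Mat} (hA : Bal A0 A1 A2 A3) (hB : Bal B0 B1 B2 B3) :
    Bal (A0 * B0) (A1 * B1) (A2 * B2) (A3 * B3) where
  mem0 := UT3.mul_mem hA.mem0 hB.mem0
  mem1 := UT3.mul_mem hA.mem1 hB.mem1
  mem2 := UT3.mul_mem hA.mem2 hB.mem2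
  mem3 := UT3.mul_mem hA.mem3 hB.mem3
  d1 i := by rw [UT3.mul_diag hA.mem1 hB.mem1, UT3.mul_diag hA.mem0 hB.mem0, hA.d1, hB.d1]
  d2 i := by rw [UT3.mul_diag hA.mem2 hB.mem2, UT3.mul_diag hA.mem0 hB.mem0, hA.d2, hB.d2]
  d3 i := by rw [UT3.mul_diag hA.mem3 hB.mem3, UT3.mul_diag hA.mem0 hB.mem0, hA.d3, hB.d3]
  e01 := by
    rw [UT3.mul01 hB.mem0, UT3.mul01 hB.mem1, UT3.mul01 hB.mem2, UT3.mul01 hB.mem3,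
      hA.d1, hA.d2, hA.d3, hB.d1, hB.d2, hB.d3]
    linear_combination A0 0 0 * hB.e01 + B0 1 1 * hA.e01
  e12 := by
    rw [UT3.mul12 hA.mem0, UT3.mul12 hA.mem1, UT3.mul12 hA.mem2, UT3.mul12 hA.mem3,
      hA.d1, hA.d2, hA.d3, hB.d1, hB.d2, hB.d3]
    linear_combination A0 1 1 * hB.e12 + B0 2 2 * hA.e12

lemma Bal.prod {F0 F1 F2 F3 : ℕ → Mat} (l : List ℕ)
    (h : ∀ j ∈ l, Bal (F0 j) (F1 j) (F2 j) (F3 j)) :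
    Bal (l.map F0).prod (l.map F1).prod (l.map F2).prod (l.map F3).prod := by
  induction l with
  | nil => exact Bal.one
  | cons a l ih =>
    simp only [List.map_cons, List.prod_cons]
    exact (h a (by simp)).mul (ih fun j hj => h j (by simp [hj]))

lemma Bal.of_eq_eq {X Y : Mat} (hX : X ∈ UT3) (hY : Y ∈ UT3) (hd : ∀ i, Y i i = X i i)
    {b0 b1 b2 b3 : ℕ} (h : b0 = b1 ∧ b2 = b3 ∨ b0 = b2 ∧ b1 = b3) :
    Bal (if b0 = 0 then X else Y) (if b1 = 0 then X else Y) (if b2 = 0 then X else Y)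
      (if b3 = 0 then X else Y) := by
  have hm : ∀ b : ℕ, (if b = 0 then X else Y) ∈ UT3 := by intro b; split_ifs <;> assumption
  have hdi : ∀ (b b' : ℕ) i, (if b = 0 then X else Y) i i = (if b' = 0 then X else Y) i i := by
    intro b b' i; split_ifs <;> simp [hd]
  refine ⟨hm _, hm _, hm _, hm _, hdi _ _, hdi _ _, hdi _ _, ?_, ?_⟩ <;>
    rcases h with ⟨rfl, rfl⟩ | ⟨rfl, rfl⟩ <;> ring

/-- Consider the commutator `x y - y x` surrounded by products `P' P''` and `R' R''`, where for each
`i`, either both `x` and `y` have the diagonal entry 1 in position `i` or all four factors have the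
entry 0 there. The result has at most one nonzero entry, in the upper right corner, and this entry
vanishes if the upper left entry of `P'` or the lower right entry of `R''` does. -/
lemma comm_entries {x y P' P'' R' R'' : Mat} (hx : x ∈ UT3) (hy : y ∈ UT3)
    (hP' : P' ∈ UT3) (hP'' : P'' ∈ UT3) (hR' : R' ∈ UT3) (hR'' : R'' ∈ UT3)
    (h : ∀ i, (x i i = 1 ∧ y i i = 1) ∨
      (P' i i = 0 ∧ P'' i i = 0 ∧ R' i i = 0 ∧ R'' i i = 0))
    (H : Mat) (hH : H = (P' * P'') * (x * y - y * x) * (R' * R'')) :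
    (∀ i j, ¬ (i = 0 ∧ j = 2) → H i j = 0) ∧ (P' 0 0 = 0 → H 0 2 = 0) ∧
      (R'' 2 2 = 0 → H 0 2 = 0) := by
  obtain ⟨p1, p2, p3⟩ := UT3.low (UT3.mul_mem hP' hP'')
  obtain ⟨r1, r2, r3⟩ := UT3.low (UT3.mul_mem hR' hR'')
  obtain ⟨x1, x2, x3⟩ := UT3.low (UT3.mul_mem hx hy)
  obtain ⟨y1, y2, y3⟩ := UT3.low (UT3.mul_mem hy hx)
  have hDd : ∀ i, (x * y - y * x) i i = 0 := by
    intro i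
    rw [Matrix.sub_apply, UT3.mul_diag hx hy, UT3.mul_diag hy hx]
    ring
  have hD10 : (x * y - y * x) 1 0 = 0 := by rw [Matrix.sub_apply, x1, y1, sub_zero]
  have hD20 : (x * y - y * x) 2 0 = 0 := by rw [Matrix.sub_apply, x2, y2, sub_zero]
  have hD21 : (x * y - y * x) 2 1 = 0 := by rw [Matrix.sub_apply, x3, y3, sub_zero]
  -- If both diagonal entries next to an entry on the superdiagonal are 1 throughout, then
  -- that entry of the commutator vanishes.
  have hD01 : (P' * P'') 0 0 * (x * y - y * x) 0 1 * (R' * R'') 1 1 = 0 := by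
    rw [UT3.mul_diag hP' hP'', UT3.mul_diag hR' hR'', Matrix.sub_apply, UT3.mul01 hy,
      UT3.mul01 hx]
    rcases h 0 with ⟨h1, h2⟩ | ⟨h1, -⟩
    · rcases h 1 with ⟨h3, h4⟩ | ⟨-, -, h3, -⟩
      · rw [h1, h2, h3, h4]; ring
      · rw [h3]; ring
    · rw [h1]; ring
  have hD12 : (P' * P'') 1 1 * (x * y - y * x) 1 2 * (R' * R'') 2 2 = 0 := by
    rw [UT3.mul_diag hP' hP'', UT3.mul_diag hR' hR'', Matrix.sub_apply, UT3.mul12 hy,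
      UT3.mul12 hx]
    rcases h 1 with ⟨h1, h2⟩ | ⟨h1, -⟩
    · rcases h 2 with ⟨h3, h4⟩ | ⟨-, -, h3, -⟩
      · rw [h1, h2, h3, h4]; ring
      · rw [h3]; ring
    · rw [h1]; ring
  have hP01 : P' 0 0 = 0 → (P' * P'') 0 1 * (x * y - y * x) 1 2 * (R' * R'') 2 2 = 0 := by
    intro h0
    rw [UT3.mul01 hP'', UT3.mul_diag hR' hR'', Matrix.sub_apply, UT3.mul12 hy,
      UT3.mul12 hx, h0]
    rcases h 1 with ⟨h1, h2⟩ | ⟨-, h1, -⟩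
    · rcases h 2 with ⟨h3, h4⟩ | ⟨-, -, h3, -⟩
      · rw [h1, h2, h3, h4]; ring
      · rw [h3]; ring
    · rw [h1]; ring
  have hR12 : R'' 2 2 = 0 → (P' * P'') 0 0 * (x * y - y * x) 0 1 * (R' * R'') 1 2 = 0 := by
    intro h0
    rw [UT3.mul12 hR', UT3.mul_diag hP' hP'', Matrix.sub_apply, UT3.mul01 hy,
      UT3.mul01 hx, h0]
    rcases h 0 with ⟨h1, h2⟩ | ⟨h1, -⟩
    · rcases h 1 with ⟨h3, h4⟩ | ⟨-, -, h3, -⟩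
      · rw [h1, h2, h3, h4]; ring
      · rw [h3]; ring
    · rw [h1]; ring
  have hP00 : P' 0 0 = 0 → (P' * P'') 0 0 = 0 := by
    intro h0
    rw [UT3.mul_diag hP' hP'', h0, zero_mul]
  have hR22 : R'' 2 2 = 0 → (R' * R'') 2 2 = 0 := by
    intro h0
    rw [UT3.mul_diag hR' hR'', h0, mul_zero]
  have hD00 := hDd 0
  have hD11 := hDd 1
  have hD22 := hDd 2
  generalize x * y - y * x = D at *
  generalize P' * P'' = P at *
  generalize R' * R'' = R at *
  have hH02 : H 0 2 = P 0 0 * D 0 1 * R 1 2 + P 0 0 * D 0 2 * R 2 2 + P 0 1 * D 1 2 * R 2 2 := by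
    simp [Matrix.mul_apply, Fin.sum_univ_three, *]
    ring
  refine ⟨?_, ?_, ?_⟩
  · intro i j hij
    fin_cases i <;> fin_cases j <;>
      first
      | exact absurd ⟨rfl, rfl⟩ hij
      | simp [hH, Matrix.mul_apply, Fin.sum_univ_three, p1, p2, p3, r1, r2, r3, hD00, hD11, hD22,
          hD10, hD20, hD21]
    · simpa using hD01
    · simpa using hD12
  · intro h0
    rw [hH02, hP00 h0, hP01 h0]
    ring
  · intro h0
    rw [hH02, hR22 h0, hR12 h0]
    ring

/-- The alternating sum of the four surrounded commutators vanishes. -/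
lemma comm_sum {D P0 P1 P2 P3 R0 R1 R2 R3 : Mat} (hP : Bal P0 P1 P2 P3) (hR : Bal R0 R1 R2 R3)
    (hD : ∀ i j : Fin 3, (j : ℕ) ≤ i → D i j = 0) :
    (P0 * D * R0) 0 2 + (P3 * D * R3) 0 2 = (P1 * D * R1) 0 2 + (P2 * D * R2) 0 2 := by
  have key : ∀ P R : Mat, P ∈ UT3 → R ∈ UT3 → (P * D * R) 0 2 =
      P 0 0 * D 0 1 * R 1 2 + P 0 0 * D 0 2 * R 2 2 + P 0 1 * D 1 2 * R 2 2 := by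
    intro P R _ _
    simp [Matrix.mul_apply, Fin.sum_univ_three, hD]
    ring
  rw [key _ _ hP.mem0 hR.mem0, key _ _ hP.mem1 hR.mem1, key _ _ hP.mem2 hR.mem2,
    key _ _ hP.mem3 hR.mem3, hP.d1, hP.d2, hP.d3, hR.d1, hR.d2, hR.d3]
  linear_combination P0 0 0 * D 0 1 * hR.e12 + D 1 2 * R0 2 2 * hP.e01

/-- If the `H`s multiply to zero and the `G`s act on them trivially, then replacing some of the
factors `G` by `G + H` in the product of the `G`s just adds the corresponding `H`s. -/
lemma four_prod {G0 G1 G2 G3 H0 H1 H2 H3 : Mat}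
    (hGH : ∀ G ∈ [G0, G1, G2, G3], ∀ H ∈ [H0, H1, H2, H3], G * H = H ∧ H * G = H)
    (hHH : ∀ H ∈ [H0, H1, H2, H3], ∀ H' ∈ [H0, H1, H2, H3], H * H' = 0)
    (hs : H0 + H3 = H1 + H2) :
    (G0 + H0) * G1 * G2 * (G3 + H3) = G0 * (G1 + H1) * (G2 + H2) * G3 := by
  simp only [List.mem_cons, List.not_mem_nil, or_false, forall_eq_or_imp, forall_eq] at hGH hHH
  simp only [add_mul, mul_add, hGH, hHH, mul_assoc]
  simp only [← mul_assoc, add_zero]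
  rw [zero_mul, add_assoc, hs]
  abel

/-- Matrices concentrated in the upper right corner are fixed by multiplication with elements of
`UT₃(ℝ)` whose outer diagonal entries are 1. -/
lemma corner_mul {G H : Mat} (hG : G ∈ UT3) (hH : ∀ i j, ¬ (i = 0 ∧ j = 2) → H i j = 0)
    (h0 : G 0 0 = 1 ∨ H 0 2 = 0) (h2 : G 2 2 = 1 ∨ H 0 2 = 0) : G * H = H ∧ H * G = H := by
  obtain ⟨g1, g2, g3⟩ := UT3.low hG
  have h00 := hH 0 0 (by simp)
  have h01 := hH 0 1 (by simp)
  have h10 := hH 1 0 (by simp)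
  have h11 := hH 1 1 (by simp)
  have h12 := hH 1 2 (by simp)
  have h20 := hH 2 0 (by simp)
  have h21 := hH 2 1 (by simp)
  have h22 := hH 2 2 (by simp)
  constructor <;> ext i j <;> fin_cases i <;> fin_cases j <;>
    simp [Matrix.mul_apply, Fin.sum_univ_three, *]
  · rcases h0 with h | h <;> simp [h]
  · rcases h2 with h | h <;> simp [h]

lemma corner_mul_corner {H H' : Mat} (hH : ∀ i j, ¬ (i = 0 ∧ j = 2) → H i j = 0)
    (hH' : ∀ i j, ¬ (i = 0 ∧ j = 2) → H' i j = 0) : H * H' = 0 := by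
  ext i j
  rw [Matrix.mul_apply]
  refine Finset.sum_eq_zero fun k _ => ?_
  by_cases hk : k = 2
  · rw [hH' k j (by rintro ⟨rfl, -⟩; simp at hk), mul_zero]
  · rw [hH i k (fun h => hk h.2), zero_mul]

/-- The value of the block number `t` of `word m b` under the substitution `f`. -/
def blk (f : ℕ → Mat) (m b t : ℕ) : Mat :=
  if ori m b t = 0 then f (2 * (t % m)) * f (2 * (t % m) + 1)
  else f (2 * (t % m) + 1) * f (2 * (t % m))

/-- The value of the factor of `word m b` formed by `l` blocks starting from block `s`. -/
def seg (f : ℕ → Mat) (m b s l : ℕ) : Mat := ((List.range l).map fun j => blk f m b (s + j)).prod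

lemma seg_add (f : ℕ → Mat) (m b s l l' : ℕ) :
    seg f m b s (l + l') = seg f m b s l * seg f m b (s + l) l' := by
  simp [seg, List.range_add, Function.comp_def, add_assoc]

lemma seg_one (f : ℕ → Mat) (m b s : ℕ) : seg f m b s 1 = blk f m b s := by
  simp [seg]

lemma word_prod (f : ℕ → Mat) (m b : ℕ) : ((word m b).map f).prod = seg f m b 0 (32 * m) := by
  have key : ∀ T, (((List.range (2 * T)).map (letter m b)).map f).prod = seg f m b 0 T := by
    intro T
    induction T with
    | zero => simp [seg]
    | succ T ih =>
      rw [seg_add, ← ih, seg_one, zero_add, show 2 * (T + 1) = 2 * T + 1 + 1 by ring,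
        List.range_succ, List.range_succ]
      simp only [List.map_append, List.prod_append, List.map_cons, List.map_nil, List.prod_cons,
        List.prod_nil, mul_one, mul_assoc]
      congr 1
      have h1 : 2 * T / 2 = T := by omega
      have h2 : (2 * T + 1) / 2 = T := by omega
      have h3 : ori m b T = 0 ∨ ori m b T = 1 := by unfold ori; split_ifs <;> omega
      unfold letter blk
      rw [h1, h2]
      rcases h3 with h3 | h3 <;> rw [h3]
      · rw [if_pos rfl, show (2 * T + 0) % 2 = 0 by omega,
          show (2 * T + 1 + 0) % 2 = 1 by omega, add_zero]
      · rw [if_neg one_ne_zero, show (2 * T + 1) % 2 = 1 by omega,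
          show (2 * T + 1 + 1) % 2 = 0 by omega, add_zero]
  rw [word, show 64 * m = 2 * (32 * m) by ring, key]

lemma blk_mem {f : ℕ → Mat} (hf : ∀ i, f i ∈ UT3) (m b t : ℕ) : blk f m b t ∈ UT3 := by
  unfold blk
  split_ifs
  · exact UT3.mul_mem (hf _) (hf _)
  · exact UT3.mul_mem (hf _) (hf _)

lemma seg_mem {f : ℕ → Mat} (hf : ∀ i, f i ∈ UT3) (m b s l : ℕ) : seg f m b s l ∈ UT3 :=
  UT3.prod_mem _ _ fun _ => blk_mem hf m b _

lemma blk_diag {f : ℕ → Mat} (hf : ∀ i, f i ∈ UT3) (m b t : ℕ) (i : Fin 3) :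
    blk f m b t i i = f (2 * (t % m)) i i * f (2 * (t % m) + 1) i i := by
  unfold blk
  split_ifs
  · exact UT3.mul_diag (hf _) (hf _) i
  · rw [UT3.mul_diag (hf _) (hf _) i, mul_comm]

/-- As `m` consecutive blocks involve all letters, for each `i` either all letters have the
diagonal entry 1 in position `i`, or all segments of at least `m` blocks have the entry 0. -/
lemma seg_diag {f : ℕ → Mat} (hf : ∀ i, f i ∈ UT3) (m : ℕ) (hm : 0 < m) (b : ℕ) (i : Fin 3) :
    ((∀ s l, seg f m b s l i i = 1) ∧ f 0 i i = 1 ∧ f 1 i i = 1) ∨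
      ∀ s l, m ≤ l → seg f m b s l i i = 0 := by
  have hsucc : ∀ s l, seg f m b s (l + 1) i i =
      seg f m b s l i i * blk f m b (s + l) i i := by
    intro s l
    rw [seg_add, seg_one, UT3.mul_diag (seg_mem hf _ _ _ _) (blk_mem hf _ _ _)]
  by_cases h : ∃ c < m, f (2 * c) i i * f (2 * c + 1) i i = 0
  · obtain ⟨c, hc, h0⟩ := h
    right
    intro s l hl
    obtain ⟨j, hj, hjc⟩ : ∃ j < m, (s + j) % m = c := by
      refine ⟨(c + (m - s % m)) % m, Nat.mod_lt _ hm, ?_⟩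
      have h1 := Nat.mod_lt s hm
      have h2 := Nat.div_add_mod s m
      rw [Nat.add_mod_mod, show s + (c + (m - s % m)) = c + m * (s / m + 1) by
        rw [mul_add]; omega, Nat.add_mul_mod_self_left, Nat.mod_eq_of_lt hc]
    have hlt : j < l := by omega
    clear hl
    induction l with
    | zero => omega
    | succ l ih =>
      rw [hsucc]
      rcases Nat.lt_succ_iff_lt_or_eq.1 hlt with h3 | rfl
      · rw [ih h3, zero_mul]
      · rw [blk_diag hf, hjc, h0, mul_zero]
  · left
    push Not at h
    have h1 : ∀ c < m, f (2 * c) i i = 1 ∧ f (2 * c + 1) i i = 1 := by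
      intro c hc
      have := h c hc
      rcases (hf (2 * c)).2 i with h2 | h2
      · simp [h2] at this
      rcases (hf (2 * c + 1)).2 i with h3 | h3
      · simp [h3] at this
      exact ⟨h2, h3⟩
    refine ⟨fun s l => ?_, by simpa using h1 0 hm⟩
    induction l with
    | zero => simp [seg]
    | succ l ih =>
      obtain ⟨h2, h3⟩ := h1 ((s + l) % m) (Nat.mod_lt _ hm)
      rw [hsucc, ih, blk_diag hf, h2, h3, one_mul, one_mul]

/-- Outside of the initial blocks of the rows `8 k + 4`, the digits of `8 k + g`, where `k`
ranges over 0, 1, 2, 3, depend on at most one of the two binary digits of `k`; therefore the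
corresponding segments are balanced. -/
lemma seg_bal {f : ℕ → Mat} (hf : ∀ i, f i ∈ UT3) (m : ℕ) (hm : 0 < m) (b s l : ℕ)
    (h : ∀ j < l, s + j < 8 * m ∧ s + j ≠ 4 * m) :
    Bal (seg f m b s l) (seg f m b (8 * m + s) l) (seg f m b (8 * m * 2 + s) l)
      (seg f m b (8 * m * 3 + s) l) := by
  refine Bal.prod _ fun j hj => ?_
  obtain ⟨h1, h2⟩ := h j (List.mem_range.1 hj)
  set t := s + j with ht
  have hmod : ∀ k, (8 * m * k + t) % m = t % m := by
    intro k
    rw [show 8 * m * k + t = t + m * (8 * k) by ring, Nat.add_mul_mod_self_left]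
  have hdiv : ∀ k, (8 * m * k + t) / m = t / m + 8 * k := by
    intro k
    rw [show 8 * m * k + t = t + m * (8 * k) by ring, Nat.add_mul_div_left _ _ hm]
  have hg : t / m < 8 := (Nat.div_lt_iff_lt_mul hm).2 h1
  have hns : ¬ (t % m = 0 ∧ t / m = 4) := by
    rintro ⟨h3, h4⟩
    have := Nat.div_add_mod t m
    rw [h3, h4] at this
    omega
  have hori : ∀ k, ori m b (8 * m * k + t) = (t / m + 8 * k) / 2 ^ (t % m % 5) % 2 := by
    intro k
    rw [ori, hmod, hdiv, if_neg]
    generalize t / m = g at *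
    generalize t % m = r at *
    omega
  have h0 := hori 0
  have h1 := hori 1
  have h2 := hori 2
  have h3 := hori 3
  have e1 := hmod 1
  have e2 := hmod 2
  have e3 := hmod 3
  simp only [mul_zero, zero_add, mul_one, add_zero] at h0 h1 e1
  simp only [add_assoc, ← ht]
  unfold blk
  rw [e1, e2, e3]
  refine Bal.of_eq_eq (UT3.mul_mem (hf _) (hf _)) (UT3.mul_mem (hf _) (hf _)) (fun i => ?_) ?_
  · rw [UT3.mul_diag (hf _) (hf _), UT3.mul_diag (hf _) (hf _), mul_comm]
  · rw [h0, h1, h2, h3]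
    have hr : t % m % 5 < 5 := Nat.mod_lt _ (by norm_num)
    generalize t % m % 5 = r at hr
    clear h0 h1 h2 h3 hori hns hdiv
    generalize t / m = g at hg
    interval_cases r <;> interval_cases g <;> simp

lemma ori_indep (m b t : ℕ) (h : ¬ (t % m = 0 ∧ t / m % 8 = 4)) : ori m b t = ori m 0 t := by
  rw [ori, ori, if_neg h, if_neg h]

lemma seg_indep (f : ℕ → Mat) (m : ℕ) (hm : 0 < m) (b k s l : ℕ)
    (h : ∀ j < l, s + j < 8 * m ∧ s + j ≠ 4 * m) :
    seg f m b (8 * m * k + s) l = seg f m 0 (8 * m * k + s) l := by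
  unfold seg
  congr 1
  refine List.map_congr_left fun j hj => ?_
  obtain ⟨h1, h2⟩ := h j (List.mem_range.1 hj)
  unfold blk
  rw [ori_indep m b]
  rintro ⟨h3, h4⟩
  rw [show 8 * m * k + s + j = (s + j) + m * (8 * k) by ring] at h3 h4
  rw [Nat.add_mul_mod_self_left] at h3
  rw [Nat.add_mul_div_left _ _ hm] at h4
  have hg : (s + j) / m < 8 := (Nat.div_lt_iff_lt_mul hm).2 h1
  have h5 := Nat.div_add_mod (s + j) m
  have h6 : (s + j) / m = 4 := by
    generalize (s + j) / m = g at hg h4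
    omega
  rw [h3, h6] at h5
  omega

/-- The product of eight rows, decomposed around the only block that depends on `b`. -/
lemma place_eq (f : ℕ → Mat) (m : ℕ) (hm : 0 < m) (b k : ℕ) :
    seg f m b (8 * m * k) (8 * m) =
      seg f m 0 (8 * m * k) (2 * m) * seg f m 0 (8 * m * k + 2 * m) (2 * m) *
      (if (k % 2 + k / 2 + b) % 2 = 0 then f 0 * f 1 else f 1 * f 0) *
      (seg f m 0 (8 * m * k + (4 * m + 1)) (2 * m - 1) *
        seg f m 0 (8 * m * k + 6 * m) (2 * m)) := by
  have hb : blk f m b (8 * m * k + 4 * m) =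
      if (k % 2 + k / 2 + b) % 2 = 0 then f 0 * f 1 else f 1 * f 0 := by
    have h1 : (8 * m * k + 4 * m) % m = 0 := by
      rw [show 8 * m * k + 4 * m = m * (8 * k + 4) by ring, Nat.mul_mod_right]
    have h2 : (8 * m * k + 4 * m) / m = 8 * k + 4 := by
      rw [show 8 * m * k + 4 * m = m * (8 * k + 4) by ring, Nat.mul_div_cancel_left _ hm]
    have h3 : ori m b (8 * m * k + 4 * m) = (k % 2 + k / 2 + b) % 2 := by
      rw [ori, h1, h2, if_pos ⟨rfl, by omega⟩]
      have : (8 * k + 4) / 8 = k := by omega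
      have : (8 * k + 4) / 16 = k / 2 := by omega
      simp only [*]
    rw [blk, h3, h1]
  have e8 : 8 * m = 2 * m + (2 * m + (1 + ((2 * m - 1) + 2 * m))) := by omega
  rw [show seg f m b (8 * m * k) (8 * m) = _ from congrArg (seg f m b (8 * m * k)) e8, seg_add,
    seg_add, seg_add, seg_add, seg_one]
  have e0 : 8 * m * k + 2 * m + 2 * m = 8 * m * k + 4 * m := by ring
  have e1 : 8 * m * k + 4 * m + 1 = 8 * m * k + (4 * m + 1) := by ring
  have e2 : 8 * m * k + (4 * m + 1) + (2 * m - 1) = 8 * m * k + 6 * m := by omega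
  have i0 := seg_indep f m hm b k 0 (2 * m) (by omega)
  have i1 := seg_indep f m hm b k (2 * m) (2 * m) (by omega)
  have i2 := seg_indep f m hm b k (4 * m + 1) (2 * m - 1) (by omega)
  have i3 := seg_indep f m hm b k (6 * m) (2 * m) (by omega)
  rw [add_zero] at i0
  rw [e0, e1, e2, hb, i0, i1, i2, i3]
  simp only [mul_assoc]

/-- The identity between the two words holds in `UT₃(ℝ)`: interchanging `f 0` and `f 1` in one of
the four places adds or subtracts a matrix concentrated in the upper right corner, and the four
changes cancel. -/
lemma listId_word (m : ℕ) (hm : 0 < m) : ListId (word m 0) (word m 1) := by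
  intro f hf
  have split : ∀ b, seg f m b 0 (32 * m) = seg f m b (8 * m * 0) (8 * m) *
      seg f m b (8 * m * 1) (8 * m) * seg f m b (8 * m * 2) (8 * m) *
      seg f m b (8 * m * 3) (8 * m) := by
    intro b
    rw [show 32 * m = 8 * m + 8 * m + 8 * m + 8 * m by ring, seg_add, seg_add, seg_add,
      show 0 + (8 * m + 8 * m + 8 * m) = 8 * m * 3 by ring,
      show 0 + (8 * m + 8 * m) = 8 * m * 2 by ring, show 0 + 8 * m = 8 * m * 1 by ring, mul_zero]
  rw [word_prod, word_prod, split, split]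
  -- The four products `P k = P' k * P'' k` and `R k = R' k * R'' k` around the special blocks.
  let P' : ℕ → Mat := fun k => seg f m 0 (8 * m * k) (2 * m)
  let P'' : ℕ → Mat := fun k => seg f m 0 (8 * m * k + 2 * m) (2 * m)
  let R' : ℕ → Mat := fun k => seg f m 0 (8 * m * k + (4 * m + 1)) (2 * m - 1)
  let R'' : ℕ → Mat := fun k => seg f m 0 (8 * m * k + 6 * m) (2 * m)
  have hplace : ∀ b k, seg f m b (8 * m * k) (8 * m) = P' k * P'' k *
      (if (k % 2 + k / 2 + b) % 2 = 0 then f 0 * f 1 else f 1 * f 0) * (R' k * R'' k) :=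
    fun b k => place_eq f m hm b k
  have hBP : Bal (P' 0 * P'' 0) (P' 1 * P'' 1) (P' 2 * P'' 2) (P' 3 * P'' 3) := by
    have h1 := seg_bal hf m hm 0 0 (2 * m) (by omega)
    have h2 := seg_bal hf m hm 0 (2 * m) (2 * m) (by omega)
    simpa [P', P''] using h1.mul h2
  have hBR : Bal (R' 0 * R'' 0) (R' 1 * R'' 1) (R' 2 * R'' 2) (R' 3 * R'' 3) := by
    have h1 := seg_bal hf m hm 0 (4 * m + 1) (2 * m - 1) (by omega)
    have h2 := seg_bal hf m hm 0 (6 * m) (2 * m) (by omega)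
    simpa [R', R''] using h1.mul h2
  have hd := seg_diag hf m hm 0
  have mP' : ∀ k, P' k ∈ UT3 := fun k => seg_mem hf _ _ _ _
  have mP'' : ∀ k, P'' k ∈ UT3 := fun k => seg_mem hf _ _ _ _
  have mR' : ∀ k, R' k ∈ UT3 := fun k => seg_mem hf _ _ _ _
  have mR'' : ∀ k, R'' k ∈ UT3 := fun k => seg_mem hf _ _ _ _
  have hdiag : ∀ i, ((∀ k, P' k i i = 1 ∧ P'' k i i = 1 ∧ R' k i i = 1 ∧ R'' k i i = 1) ∧
      f 0 i i = 1 ∧ f 1 i i = 1) ∨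
      ∀ k, P' k i i = 0 ∧ P'' k i i = 0 ∧ R' k i i = 0 ∧ R'' k i i = 0 := by
    intro i
    rcases hd i with ⟨h1, h2⟩ | h1
    · exact Or.inl ⟨fun k => ⟨h1 _ _, h1 _ _, h1 _ _, h1 _ _⟩, h2⟩
    · exact Or.inr fun k => ⟨h1 _ _ (by omega), h1 _ _ (by omega), h1 _ _ (by omega),
        h1 _ _ (by omega)⟩
  clear_value P' P'' R' R''
  let G : ℕ → Mat := fun k => P' k * P'' k * (f 1 * f 0) * (R' k * R'' k)
  let H : ℕ → Mat := fun k => P' k * P'' k * (f 0 * f 1 - f 1 * f 0) * (R' k * R'' k)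
  have hGH : ∀ k, P' k * P'' k * (f 0 * f 1) * (R' k * R'' k) = G k + H k := by
    intro k
    simp only [G, H]
    noncomm_ring
  have hent : ∀ k, (∀ i j, ¬ (i = 0 ∧ j = 2) → H k i j = 0) ∧ (P' k 0 0 = 0 → H k 0 2 = 0) ∧
      (R'' k 2 2 = 0 → H k 0 2 = 0) := fun k =>
    comm_entries (hf 0) (hf 1) (mP' k) (mP'' k) (mR' k) (mR'' k)
      (fun i => (hdiag i).imp (fun h => h.2) fun h => h k) (H k) rfl
  have mG : ∀ k, G k ∈ UT3 := fun k =>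
    UT3.mul_mem (UT3.mul_mem (UT3.mul_mem (mP' k) (mP'' k)) (UT3.mul_mem (hf 1) (hf 0)))
      (UT3.mul_mem (mR' k) (mR'' k))
  have hG1 : ∀ k i, (∀ k, P' k i i = 1 ∧ P'' k i i = 1 ∧ R' k i i = 1 ∧ R'' k i i = 1) →
      f 0 i i = 1 ∧ f 1 i i = 1 → G k i i = 1 := by
    intro k i h1 h2
    obtain ⟨a1, a2, a3, a4⟩ := h1 k
    simp only [G]
    rw [UT3.mul_diag (UT3.mul_mem (UT3.mul_mem (mP' k) (mP'' k)) (UT3.mul_mem (hf 1) (hf 0)))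
      (UT3.mul_mem (mR' k) (mR'' k)),
      UT3.mul_diag (UT3.mul_mem (mP' k) (mP'' k)) (UT3.mul_mem (hf 1) (hf 0)),
      UT3.mul_diag (mP' k) (mP'' k), UT3.mul_diag (hf 1) (hf 0), UT3.mul_diag (mR' k) (mR'' k),
      a1, a2, a3, a4, h2.1, h2.2]
    norm_num
  have hact : ∀ k l, G k * H l = H l ∧ H l * G k = H l := by
    intro k l
    refine corner_mul (mG k) (hent l).1 ?_ ?_
    · rcases hdiag 0 with ⟨h1, h2⟩ | h1
      · exact Or.inl (hG1 k 0 h1 h2)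
      · exact Or.inr ((hent l).2.1 (h1 l).1)
    · rcases hdiag 2 with ⟨h1, h2⟩ | h1
      · exact Or.inl (hG1 k 2 h1 h2)
      · exact Or.inr ((hent l).2.2 (h1 l).2.2.2)
  have hnil : ∀ k l, H k * H l = 0 := fun k l => corner_mul_corner (hent k).1 (hent l).1
  have hsum : H 0 + H 3 = H 1 + H 2 := by
    ext i j
    simp only [Matrix.add_apply]
    by_cases hij : i = 0 ∧ j = 2
    · obtain ⟨rfl, rfl⟩ := hij
      refine comm_sum hBP hBR fun i j hij => ?_
      rw [Matrix.sub_apply]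
      rcases hij.lt_or_eq with h | h
      · rw [(UT3.mul_mem (hf 0) (hf 1)).1 i j h, (UT3.mul_mem (hf 1) (hf 0)).1 i j h, sub_zero]
      · rw [Fin.ext h, UT3.mul_diag (hf 0) (hf 1), UT3.mul_diag (hf 1) (hf 0)]
        ring
    · simp [(hent _).1 i j hij]
  rw [hplace 0 0, hplace 0 1, hplace 0 2, hplace 0 3, hplace 1 0, hplace 1 1, hplace 1 2,
    hplace 1 3]
  norm_num only [if_true, if_false]
  simp only [hGH]
  refine four_prod (G0 := G 0) (G1 := G 1) (G2 := G 2) (G3 := G 3) ?_ ?_ hsum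
  · simp [hact]
  · simp [hnil]

/-! ### No finite basis -/

/-- A substitution instance of a short side of an identity of `UT₃(ℝ)` occurs in `word m b` only if
the identity is trivial. -/
lemma eq_of_infix {u v : FreeSemigroup ℕ} {m b : ℕ} (hm : 12 ≤ m)
    (h : ListId (toL u) (toL v)) (hu : (toL u).length * 24 ≤ 2 * m - 1)
    (ψ : FreeSemigroup ℕ →ₙ* FreeSemigroup ℕ) (hw : toL (ψ u) <:+: word m b) : u = v := by
  rw [hom_toL] at hw
  have hsep : SepByLinear (toL u) :=
    sep_of_infix (fun a f c a' c' => word_norep m b hm a f c a' c') (word_nodup m b)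
      (fun i => by simp [toL]) hu hw
  exact toL_injective (eq_of_sep h hsep)

/-- `UT₃(ℝ)` is nonfinitely based: no finite set of identities holding in `UT₃(ℝ)`
implies all identities holding in `UT₃(ℝ)`. -/
theorem UT3_real_nonfinitely_based :
    ¬ ∃ Sgm : Finset (FreeSemigroup ℕ × FreeSemigroup ℕ),
      (∀ e ∈ Sgm, SatisfiesId ↥UT3 e) ∧
      (∀ e, SatisfiesId ↥UT3 e → FollowsFrom (↑Sgm) e) := by
  rintro ⟨Sgm, hsat, hbase⟩
  obtain ⟨L, hL⟩ : ∃ L, ∀ e ∈ Sgm, (toL e.1).length + (toL e.2).length ≤ L :=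
    ⟨Sgm.sup fun e => (toL e.1).length + (toL e.2).length,
      fun e he => Finset.le_sup (f := fun e => (toL e.1).length + (toL e.2).length) he⟩
  -- Large enough for `eq_of_infix` to apply to all sides of the identities from `Sgm`.
  let m := 12 * (L + 1)
  have hm : 12 ≤ m := by simp only [m]; omega
  have hne : ∀ b, word m b ≠ [] := by
    intro b h
    have := word_length m b
    rw [h, List.length_nil] at this
    omega
  obtain ⟨W, hW⟩ := exists_toL (word m 0) (hne 0)
  obtain ⟨W', hW'⟩ := exists_toL (word m 1) (hne 1)
  have hid : SatisfiesId ↥UT3 (W, W') := by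
    rw [satisfiesId_iff, hW, hW']
    exact listId_word m (by omega)
  refine not_followsFrom (W := W) (W' := W') ?_ ?_ (hbase _ hid)
  · rintro rfl
    exact word_ne m (by omega) (hW.symm.trans hW')
  · rintro ⟨u, v⟩ he ψ hψ
    have hid' : ListId (toL u) (toL v) := (satisfiesId_iff u v).1 (hsat _ he)
    have hlen : (toL u).length + (toL v).length ≤ L := hL _ he
    rw [hW] at hψ
    rcases hψ with h | h
    · exact eq_of_infix hm hid' (by simp only [m]; omega) ψ h
    · exact (eq_of_infix hm (fun f hf => (hid' f hf).symm) (by simp only [m]; omega) ψ h).symm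
end

section
/- Let α₁, α₂, α₃, α₄ ∈ UT₃(ℝ) be matrices that all have the same main diagonal (i.e., Diag(α₁) = Diag(α₂) = Diag(α₃) = Diag(α₄)). Then α₁α₂α₁α₃α₁α₂α₁α₄α₁α₂α₁α₃α₁α₂α₁ = (α₁α₂)²α₁α₃α₁α₄α₁α₃α₁(α₂α₁)². In other words, each class of the kernel congruence of the homomorphism Diag satisfies the semigroup identity Z₄ ≈ (x₁x₂)²x₁x₃x₁x₄x₁x₃x₁(x₂x₁)², where Z₄ = x₁x₂x₁x₃x₁x₂x₁x₄x₁x₂x₁x₃x₁x₂x₁ is the fourth Zimin word. -/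
/-!
Since the common diagonal consists of 0s and 1s, there are eight possible diagonals, and for each
of them the entries of a product of 15 such matrices are explicit sums over the letters of the word.
Both words are palindromes of length 15 with the same content, the same first two letters (hence
the same last two), and the same number of occurrences of each two-letter factor, and these
data determine every entry. For instance, on the diagonal `(1,1,1)` the top right entry is
governed by the number of pairs of occurrences of letters `x` before `y`, which for a palindrome is
determined by the content, while on `(1,0,1)` it is governed by the two-letter factors. The eight cases thus reduce to polynomial
identities, obtained from the multiplication rule `upper_mul`.
-/

/-- `UT₃(ℝ)`: the set of upper triangular real `3 × 3` matrices whose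
main-diagonal entries are 0s and/or 1s. -/
def UT3set : Set (Matrix (Fin 3) (Fin 3) ℝ) :=
  {A | (∀ i j : Fin 3, (j : ℕ) < (i : ℕ) → A i j = 0) ∧
    ∀ i : Fin 3, A i i = 0 ∨ A i i = 1}

/-- `Diag(α)`: the diagonal matrix obtained from `α` by changing every off-diagonal
entry to `0`. -/
def Diag (A : Matrix (Fin 3) (Fin 3) ℝ) : Matrix (Fin 3) (Fin 3) ℝ :=
  Matrix.diagonal fun i => A i i

/-- The upper triangular matrix with diagonal `(p, q, r)`, superdiagonal `(a, b)` and top right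
entry `c`. -/
def upper (p q r a b c : ℝ) : Matrix (Fin 3) (Fin 3) ℝ :=
  !![p, a, c; 0, q, b; 0, 0, r]

lemma upper_mul (p q r a b c p' q' r' a' b' c' : ℝ) :
    upper p q r a b c * upper p' q' r' a' b' c' =
      upper (p * p') (q * q') (r * r') (p * a' + a * q') (q * b' + b * r')
        (p * c' + a * b' + c * r') := by
  ext i j
  fin_cases i <;> fin_cases j <;>
    simp [upper, Matrix.mul_apply, Fin.sum_univ_three]

lemma eq_upper_of_mem {A : Matrix (Fin 3) (Fin 3) ℝ} (h : A ∈ UT3set) :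
    A = upper (A 0 0) (A 1 1) (A 2 2) (A 0 1) (A 1 2) (A 0 2) := by
  have h10 := h.1 1 0 (by decide)
  have h20 := h.1 2 0 (by decide)
  have h21 := h.1 2 1 (by decide)
  ext i j
  fin_cases i <;> fin_cases j <;> simp [upper, h10, h20, h21]

lemma diag_entry_eq {A B : Matrix (Fin 3) (Fin 3) ℝ} (h : Diag A = Diag B) (i : Fin 3) :
    B i i = A i i := by
  simpa [Diag] using (congrFun (congrFun h i) i).symm

/-- Each class of the kernel congruence of `Diag` on `UT₃(ℝ)` satisfies the identity
`Z₄ ≈ (x₁x₂)²x₁x₃x₁x₄x₁x₃x₁(x₂x₁)²`, where `Z₄ = x₁x₂x₁x₃x₁x₂x₁x₄x₁x₂x₁x₃x₁x₂x₁`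
is the fourth Zimin word. -/
theorem theta_classes_satisfy_Z4_identity
    (a₁ a₂ a₃ a₄ : Matrix (Fin 3) (Fin 3) ℝ)
    (h₁ : a₁ ∈ UT3set) (h₂ : a₂ ∈ UT3set) (h₃ : a₃ ∈ UT3set) (h₄ : a₄ ∈ UT3set)
    (e₂ : Diag a₁ = Diag a₂) (e₃ : Diag a₁ = Diag a₃) (e₄ : Diag a₁ = Diag a₄) :
    a₁ * a₂ * a₁ * a₃ * a₁ * a₂ * a₁ * a₄ * a₁ * a₂ * a₁ * a₃ * a₁ * a₂ * a₁ =
      (a₁ * a₂) ^ 2 * a₁ * a₃ * a₁ * a₄ * a₁ * a₃ * a₁ * (a₂ * a₁) ^ 2 := by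
  have hd := h₁.2
  rw [eq_upper_of_mem h₁, eq_upper_of_mem h₂, eq_upper_of_mem h₃, eq_upper_of_mem h₄]
  simp only [diag_entry_eq e₂, diag_entry_eq e₃, diag_entry_eq e₄]
  rcases hd 0 with h0 | h0 <;> rcases hd 1 with h1 | h1 <;> rcases hd 2 with h2 | h2 <;>
    simp only [h0, h1, h2, pow_two, upper_mul, mul_zero, zero_mul, mul_one, one_mul, add_zero,
      zero_add] <;>
    congr 1 <;> ring
end

section
/- For any upper triangular 3×3 real matrices α, β, γ whose main diagonals are all (1, 1, 0), one has αβγ = βαγ; that is, the subsemigroup S₁₁₀ of UT₃(ℝ) satisfies the identity xyz ≈ yxz. -/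
/-- `S₁₁₀`: the set of upper triangular real `3 × 3` matrices with main diagonal
`(1, 1, 0)`. -/
def S110 : Set (Matrix (Fin 3) (Fin 3) ℝ) :=
  {A | (∀ i j : Fin 3, (j : ℕ) < (i : ℕ) → A i j = 0) ∧
    A 0 0 = 1 ∧ A 1 1 = 1 ∧ A 2 2 = 0}

/-- The subsemigroup `S₁₁₀` of `UT₃(ℝ)` satisfies the identity `xyz ≈ yxz`. -/
theorem S110_satisfies_xyz_eq_yxz
    (a b c : Matrix (Fin 3) (Fin 3) ℝ)
    (ha : a ∈ S110) (hb : b ∈ S110) (hc : c ∈ S110) :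
    a * b * c = b * a * c := by
  -- The last row of `c` vanishes, so only the upper left `2 × 2` blocks of `a * b` and `b * a`
  -- matter; these blocks are unipotent upper triangular, hence commute.
  obtain ⟨ha, ha0, ha1, ha2⟩ := ha
  obtain ⟨hb, hb0, hb1, hb2⟩ := hb
  obtain ⟨hc, hc0, hc1, hc2⟩ := hc
  have a10 := ha 1 0 (by decide)
  have a20 := ha 2 0 (by decide)
  have a21 := ha 2 1 (by decide)
  have b10 := hb 1 0 (by decide)
  have b20 := hb 2 0 (by decide)
  have b21 := hb 2 1 (by decide)
  have c10 := hc 1 0 (by decide)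
  have c20 := hc 2 0 (by decide)
  have c21 := hc 2 1 (by decide)
  ext i j
  fin_cases i <;> fin_cases j <;>
    simp [Matrix.mul_apply, Fin.sum_univ_three, add_comm, *]
end

section
/- For any upper triangular 3×3 real matrices α, β, γ, δ whose main diagonals are all (1, 0, 1), substituting x₁ ↦ α, x₂ ↦ β, x₃ ↦ γ, x₄ ↦ δ, one has Z₄ = αβαγαβαδαβαγαβα equal to (αβ)²αγαδαγα(βα)², and both products equal the matrix with diagonal (1, 0, 1), (1,2)-entry α₁₂, (2,3)-entry α₂₃, and (1,3)-entry ε = 8α₁₃ + 4β₁₃ + 2γ₁₃ + δ₁₃ + α₁₂(4β₂₃ + 2γ₂₃ + δ₂₃) + (4β₁₂ + 2γ₁₂ + δ₁₂)α₂₃. -/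
/-!
An element of `S₁₀₁` is determined by its entries `p`, `q`, `r` in positions `(1,2)`, `(1,3)`,
`(2,3)`, and in these coordinates the product is
`(p, q, r) (p', q', r') = (p', q + q' + p r', r)` (`s101Mat_mul`).
Hence a word evaluates to the matrix whose `(1,2)`-entry is that of the last letter, whose
`(2,3)`-entry is that of the first, and whose `(1,3)`-entry is the sum of the `(1,3)`-entries of
all letters plus the sum of `x₁₂ y₂₃` over all pairs `x y` of adjacent letters. The two words of
the identity begin and end with the same letter and have the same multisets of letters and of
adjacent pairs.
-/

/-- `S₁₀₁`: the set of upper triangular real `3 × 3` matrices with main diagonal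
`(1, 0, 1)`. -/
def S101 : Set (Matrix (Fin 3) (Fin 3) ℝ) :=
  {A | (∀ i j : Fin 3, (j : ℕ) < (i : ℕ) → A i j = 0) ∧
    A 0 0 = 1 ∧ A 1 1 = 0 ∧ A 2 2 = 1}

/-- The element of `S₁₀₁` with `(1,2)`-, `(1,3)`- and `(2,3)`-entries `p`, `q`, `r`. -/
def s101Mat (p q r : ℝ) : Matrix (Fin 3) (Fin 3) ℝ :=
  !![1, p, q; 0, 0, r; 0, 0, 1]

lemma s101Mat_mul (p q r p' q' r' : ℝ) :
    s101Mat p q r * s101Mat p' q' r' = s101Mat p' (q + q' + p * r') r := by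
  ext i j
  fin_cases i <;> fin_cases j <;> simp [s101Mat, Matrix.mul_apply, Fin.sum_univ_three]
  ring

lemma eq_s101Mat {A : Matrix (Fin 3) (Fin 3) ℝ} (hA : A ∈ S101) :
    A = s101Mat (A 0 1) (A 0 2) (A 1 2) := by
  obtain ⟨hlow, h0, h1, h2⟩ := hA
  have h10 := hlow 1 0 (by decide)
  have h20 := hlow 2 0 (by decide)
  have h21 := hlow 2 1 (by decide)
  ext i j
  fin_cases i <;> fin_cases j <;> simp [s101Mat, *]

/-- In `S₁₀₁`, the values of the fourth Zimin word `Z₄` and of the word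
`(x₁x₂)²x₁x₃x₁x₄x₁x₃x₁(x₂x₁)²` coincide, both being equal to the explicitly
described matrix with diagonal `(1, 0, 1)`. -/
theorem S101_satisfies_Z4_identity
    (a b c d : Matrix (Fin 3) (Fin 3) ℝ)
    (ha : a ∈ S101) (hb : b ∈ S101) (hc : c ∈ S101) (hd : d ∈ S101) :
    a * b * a * c * a * b * a * d * a * b * a * c * a * b * a =
      (a * b) ^ 2 * a * c * a * d * a * c * a * (b * a) ^ 2 ∧
    a * b * a * c * a * b * a * d * a * b * a * c * a * b * a =
      !![1, a 0 1, 8 * a 0 2 + 4 * b 0 2 + 2 * c 0 2 + d 0 2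
            + a 0 1 * (4 * b 1 2 + 2 * c 1 2 + d 1 2)
            + (4 * b 0 1 + 2 * c 0 1 + d 0 1) * a 1 2;
         0, 0, a 1 2;
         0, 0, 1] := by
  rw [eq_s101Mat ha, eq_s101Mat hb, eq_s101Mat hc, eq_s101Mat hd]
  simp only [pow_two, s101Mat_mul]
  constructor
  · congr 1
    ring
  · ext i j
    fin_cases i <;> fin_cases j <;> simp [s101Mat]
    ring
end

section
/- For any real upper unitriangular 3×3 matrices x, y, z, t (upper triangular with all main-diagonal entries equal to 1), one has xzytyzx = yzxtxzy. -/
/-!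
The words `p = xzy` and `q = yzx` agree in the abelianization, so in a group of class 2 they
differ by a central factor, whence `p t q = q t p`. Here this is verified in the Heisenberg
coordinates of a unitriangular matrix: both sides have the same superdiagonal entries, and the
corner entries agree as polynomials in the coordinates (`heisenberg_mul`).
-/

/-- `S₁₁₁`: the set of upper unitriangular real `3 × 3` matrices (upper triangular with
all main-diagonal entries equal to `1`), i.e. the Heisenberg group over `ℝ`. -/
def S111 : Set (Matrix (Fin 3) (Fin 3) ℝ) :=
  {A | (∀ i j : Fin 3, (j : ℕ) < (i : ℕ) → A i j = 0) ∧ ∀ i : Fin 3, A i i = 1}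

/-- Coordinates on `S111`: `a`, `b` are the superdiagonal entries and `c` the corner entry. -/
theorem exists_coords_of_mem_S111 {A : Matrix (Fin 3) (Fin 3) ℝ} (hA : A ∈ S111) :
    ∃ a b c : ℝ, A = !![1, a, c; 0, 1, b; 0, 0, 1] := by
  obtain ⟨h0, h1⟩ := hA
  refine ⟨A 0 1, A 1 2, A 0 2, ?_⟩
  ext i j
  fin_cases i <;> fin_cases j <;> simp [h0, h1]

/-- Multiplication in Heisenberg coordinates: the superdiagonal entries add, and the corner
entries add with an extra cocycle term `a * b₂`. -/
theorem heisenberg_mul (a b c a₂ b₂ c₂ : ℝ) :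
    (!![1, a, c; 0, 1, b; 0, 0, 1] * !![1, a₂, c₂; 0, 1, b₂; 0, 0, 1] :
      Matrix (Fin 3) (Fin 3) ℝ) =
      !![1, a + a₂, c + c₂ + a * b₂; 0, 1, b + b₂; 0, 0, 1] := by
  ext i j
  fin_cases i <;> fin_cases j <;> simp [Matrix.mul_apply, Fin.sum_univ_three] <;> ring

/-- The group of real upper unitriangular `3 × 3` matrices satisfies Mal'cev's identity
`xzytyzx ≈ yzxtxzy` for nilpotent groups of class 2. -/
theorem S111_satisfies_malcev_class2_identity
    (x y z t : Matrix (Fin 3) (Fin 3) ℝ)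
    (hx : x ∈ S111) (hy : y ∈ S111) (hz : z ∈ S111) (ht : t ∈ S111) :
    x * z * y * t * y * z * x = y * z * x * t * x * z * y := by
  obtain ⟨a₁, b₁, c₁, rfl⟩ := exists_coords_of_mem_S111 hx
  obtain ⟨a₂, b₂, c₂, rfl⟩ := exists_coords_of_mem_S111 hy
  obtain ⟨a₃, b₃, c₃, rfl⟩ := exists_coords_of_mem_S111 hz
  obtain ⟨a₄, b₄, c₄, rfl⟩ := exists_coords_of_mem_S111 ht
  simp only [heisenberg_mul]
  ext i j
  fin_cases i <;> fin_cases j <;> simp <;> ring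
end

section
/- Every nilpotent group of class at most 2 satisfies the semigroup identity xzytyzx ≈ yzxtxzy; that is, if G is a group whose nilpotency class is at most 2 (equivalently, its commutator subgroup is contained in its center), then for all x, y, z, t ∈ G one has xzytyzx = yzxtxzy. -/
/-- Every nilpotent group of class at most 2 (i.e. whose commutator subgroup is contained
in its center) satisfies the semigroup identity `xzytyzx ≈ yzxtxzy`. -/
theorem nilpotent_class2_satisfies_malcev_identity
    (G : Type*) [Group G] (h : commutator G ≤ Subgroup.center G)
    (x y z t : G) :
    x * z * y * t * y * z * x = y * z * x * t * x * z * y := by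
  -- With `p = xzy` and `q = yzx` the claim is `p t q = q t p`. As `p` and `q` agree in the
  -- abelianization, `p = c q` with `c` central, and both sides equal `c q t q`.
  obtain ⟨c, hc, hp⟩ : ∃ c ∈ Subgroup.center G, x * z * y = c * (y * z * x) := by
    refine ⟨x * z * y * (y * z * x)⁻¹, h ?_, by group⟩
    rw [← Abelianization.ker_of, MonoidHom.mem_ker, map_mul, map_inv, mul_inv_eq_one]
    simp only [map_mul]
    ac_rfl
  calc x * z * y * t * y * z * x = x * z * y * t * (y * z * x) := by group
    _ = c * (y * z * x * t) * (y * z * x) := by rw [hp]; group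
    _ = y * z * x * t * c * (y * z * x) := by
      rw [Subgroup.mem_center_iff.mp hc (y * z * x * t)]
    _ = y * z * x * t * (x * z * y) := by rw [hp]; group
    _ = y * z * x * t * x * z * y := by group
end

section
/- If a semigroup S satisfies the identity xzytyzx ≈ yzxtxzy (i.e., for all x, y, z, t ∈ S, xzytyzx = yzxtxzy), then S satisfies the identity Z₄ ≈ (x₁x₂)²x₁x₃x₁x₄x₁x₃x₁(x₂x₁)², i.e., for all x₁, x₂, x₃, x₄ ∈ S one has x₁x₂x₁x₃x₁x₂x₁x₄x₁x₂x₁x₃x₁x₂x₁ = (x₁x₂)²x₁x₃x₁x₄x₁x₃x₁(x₂x₁)². -/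
/-- If a semigroup satisfies the identity `xzytyzx ≈ yzxtxzy`, then it satisfies the
identity `Z₄ ≈ (x₁x₂)²x₁x₃x₁x₄x₁x₃x₁(x₂x₁)²`, where
`Z₄ = x₁x₂x₁x₃x₁x₂x₁x₄x₁x₂x₁x₃x₁x₂x₁` is the fourth Zimin word. -/
theorem malcev_identity_implies_Z4_identity
    (S : Type*) [Semigroup S]
    (h : ∀ x y z t : S, x * z * y * t * y * z * x = y * z * x * t * x * z * y)
    (x₁ x₂ x₃ x₄ : S) :
    x₁ * x₂ * x₁ * x₃ * x₁ * x₂ * x₁ * x₄ * x₁ * x₂ * x₁ * x₃ * x₁ * x₂ * x₁ =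
      (x₁ * x₂) * (x₁ * x₂) * x₁ * x₃ * x₁ * x₄ * x₁ * x₃ * x₁ * ((x₂ * x₁) * (x₂ * x₁)) := by
  -- `Z₄ = (x₁x₂) · xzytyzx · (x₂x₁)` with `x = x₁`, `y = x₁x₂x₁`, `z = x₃`, `t = x₄`.
  have key := congrArg (fun s => x₁ * x₂ * s * (x₂ * x₁)) (h x₁ (x₁ * x₂ * x₁) x₃ x₄)
  simpa only [mul_assoc] using key
end

section
/- The semigroup UT₂(ℝ) of all upper triangular real 2×2 matrices whose main-diagonal entries are 0s and/or 1s satisfies the identity Z₄ ≈ x₁x₂x₁x₃x₁²x₂x₄x₂x₁²x₃x₁x₂x₁; that is, for all x₁, x₂, x₃, x₄ ∈ UT₂(ℝ), x₁x₂x₁x₃x₁x₂x₁x₄x₁x₂x₁x₃x₁x₂x₁ = x₁x₂x₁x₃x₁x₁x₂x₄x₂x₁x₁x₃x₁x₂x₁. -/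
/-!
For upper triangular matrices `xᵢ` with rows `(aᵢ, bᵢ)` and `(0, dᵢ)`, the upper right entry of a
product is the sum, over all positions in the word, of `a(prefix) * b * d(suffix)`. Since the `aᵢ`
and `dᵢ` are idempotent, each coefficient depends only on which letters occur in the prefix and in
the suffix. The two words of the identity differ only in the two blocks `x₁x₂x₁` versus `x₁x₁x₂` and
`x₁x₂x₁` versus `x₂x₁x₁` around `x₄`. At every position in these blocks both prefix and suffix contain
`x₁, x₂, x₃`, so the coefficient only depends on the side of `x₄`, and the two words have the same
letters with the same multiplicities on each side. The diagonal entries agree because they are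
commutative monomials. In the proof, idempotency is used by splitting into the values `0` and `1`.
-/


/-- `UT₂(ℝ)`: the set of upper triangular real `2 × 2` matrices whose main-diagonal
entries are 0s and/or 1s. -/
def UT2set : Set (Matrix (Fin 2) (Fin 2) ℝ) :=
  {A | A 1 0 = 0 ∧ (A 0 0 = 0 ∨ A 0 0 = 1) ∧ (A 1 1 = 0 ∨ A 1 1 = 1)}

theorem upperTriangular_mul (a b d a' b' d' : ℝ) :
    !![a, b; 0, d] * !![a', b'; 0, d'] = !![a * a', a * b' + b * d'; 0, d * d'] := by
  simp

theorem exists_eq_of_mem_UT2set {x : Matrix (Fin 2) (Fin 2) ℝ} (h : x ∈ UT2set) :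
    ∃ a b d : ℝ, (a = 0 ∨ a = 1) ∧ (d = 0 ∨ d = 1) ∧ x = !![a, b; 0, d] := by
  obtain ⟨h0, ha, hd⟩ := h
  refine ⟨x 0 0, x 0 1, x 1 1, ha, hd, ?_⟩
  rw [← h0]
  exact Matrix.eta_fin_two x

/-- `UT₂(ℝ)` satisfies the identity `Z₄ ≈ x₁x₂x₁x₃x₁²x₂x₄x₂x₁²x₃x₁x₂x₁`, where
`Z₄ = x₁x₂x₁x₃x₁x₂x₁x₄x₁x₂x₁x₃x₁x₂x₁` is the fourth Zimin word. -/
theorem UT2_satisfies_Z4_identity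
    (x₁ x₂ x₃ x₄ : Matrix (Fin 2) (Fin 2) ℝ)
    (h₁ : x₁ ∈ UT2set) (h₂ : x₂ ∈ UT2set) (h₃ : x₃ ∈ UT2set) (h₄ : x₄ ∈ UT2set) :
    x₁ * x₂ * x₁ * x₃ * x₁ * x₂ * x₁ * x₄ * x₁ * x₂ * x₁ * x₃ * x₁ * x₂ * x₁ =
      x₁ * x₂ * x₁ * x₃ * x₁ * x₁ * x₂ * x₄ * x₂ * x₁ * x₁ * x₃ * x₁ * x₂ * x₁ := by
  obtain ⟨a₁, b₁, d₁, ha₁, hd₁, rfl⟩ := exists_eq_of_mem_UT2set h₁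
  obtain ⟨a₂, b₂, d₂, ha₂, hd₂, rfl⟩ := exists_eq_of_mem_UT2set h₂
  obtain ⟨a₃, b₃, d₃, ha₃, hd₃, rfl⟩ := exists_eq_of_mem_UT2set h₃
  obtain ⟨a₄, b₄, d₄, -, -, rfl⟩ := exists_eq_of_mem_UT2set h₄
  simp only [upperTriangular_mul]
  -- The diagonal entries of `x₄` occur linearly and can be kept symbolic.
  congr 3
  · ring
  · congr 1
    rcases ha₁ with rfl | rfl <;> rcases hd₁ with rfl | rfl <;>
    rcases ha₂ with rfl | rfl <;> rcases hd₂ with rfl | rfl <;>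
    rcases ha₃ with rfl | rfl <;> rcases hd₃ with rfl | rfl <;> ring
  · congr 2
    ring
end
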